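/- arXiv:0804.0590 — 4 statements merged into one kernel-verified Lean document; each statement's English description precedes it below -/
import Mathlib

section
/- Let f, g, h and f', g', h' be homogeneous elements of R of positive degrees such that f, g, h is a regular sequence and f', g', h' is a regular sequence. If (f',g',h') ⊆ (f,g,h) and (deg f')·(deg g')·(deg h') = (deg f)·(deg g)·(deg h), then (f',g',h') = (f,g,h). (A height-three complete intersection contained in another one of the same degree is equal to it.) -/
/-
Common setup: `R = k[x₀,…,xₙ]` is the standard graded polynomial ring
`MvPolynomial (Fin (n+1)) k` over a field `k`.
-/

open CategoryTheory MvPolynomial RingTheory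

noncomputable section

variable {k : Type} [Field k] {n : ℕ}

/-- A homogeneous ideal: one generated by homogeneous elements. -/
def IsHomogeneousIdeal (I : Ideal (MvPolynomial (Fin (n+1)) k)) : Prop :=
  ∃ S : Set (MvPolynomial (Fin (n+1)) k),
    (∀ f ∈ S, ∃ d, MvPolynomial.IsHomogeneous f d) ∧ I = Ideal.span S

/-- The height of an ideal: the infimum of the heights of the primes containing it. -/
def idealHeight (I : Ideal (MvPolynomial (Fin (n+1)) k)) : ℕ∞ :=
  ⨅ (p : PrimeSpectrum (MvPolynomial (Fin (n+1)) k)) (_ : I ≤ p.asIdeal), Order.height p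

/-- A complete intersection ideal: one generated by a regular sequence of homogeneous
elements of positive degree. -/
def IsCI (I : Ideal (MvPolynomial (Fin (n+1)) k)) : Prop :=
  ∃ l : List (MvPolynomial (Fin (n+1)) k),
    (∀ f ∈ l, ∃ d, 0 < d ∧ MvPolynomial.IsHomogeneous f d) ∧
    RingTheory.Sequence.IsRegular (MvPolynomial (Fin (n+1)) k) l ∧
    I = Ideal.span {x | x ∈ l}

/-- Vanishing of `Ext^i_R(R/I, R)`. -/
def extVanishes (I : Ideal (MvPolynomial (Fin (n+1)) k)) (i : ℕ) : Prop :=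
  Subsingleton (((Ext (MvPolynomial (Fin (n+1)) k) (ModuleCat (MvPolynomial (Fin (n+1)) k)) i).obj
    (Opposite.op (ModuleCat.of _ (MvPolynomial (Fin (n+1)) k ⧸ I)))).obj
    (ModuleCat.of _ (MvPolynomial (Fin (n+1)) k)))

/-- `Ext^i_R(R/I, R)` is a cyclic `R`-module. -/
def extCyclic (I : Ideal (MvPolynomial (Fin (n+1)) k)) (i : ℕ) : Prop :=
  ∃ m : (((Ext (MvPolynomial (Fin (n+1)) k) (ModuleCat (MvPolynomial (Fin (n+1)) k)) i).obj
      (Opposite.op (ModuleCat.of _ (MvPolynomial (Fin (n+1)) k ⧸ I)))).obj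
      (ModuleCat.of _ (MvPolynomial (Fin (n+1)) k))),
    Submodule.span (MvPolynomial (Fin (n+1)) k) {m} = ⊤

/-- An arithmetically Gorenstein homogeneous ideal of height three: a proper homogeneous
ideal of height 3 with `Ext^i_R(R/I, R) = 0` for `i ≠ 3` and `Ext^3_R(R/I, R)` cyclic. -/
def IsArithGorHt3 (I : Ideal (MvPolynomial (Fin (n+1)) k)) : Prop :=
  I ≠ ⊤ ∧ IsHomogeneousIdeal I ∧ idealHeight I = 3 ∧
    (∀ i : ℕ, i ≠ 3 → extVanishes I i) ∧ extCyclic I 3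

/-- `μ(I)`: the least cardinality of a subset of `R` generating `I`. -/
def mu (I : Ideal (MvPolynomial (Fin (n+1)) k)) : ℕ :=
  sInf {m : ℕ | ∃ S : Finset (MvPolynomial (Fin (n+1)) k),
    S.card = m ∧ Ideal.span (S : Set (MvPolynomial (Fin (n+1)) k)) = I}

/-- `a_i(I)`: the least integer `d` such that `I` contains a regular sequence of `i`
homogeneous elements each of degree at most `d`. -/
def aDeg (i : ℕ) (I : Ideal (MvPolynomial (Fin (n+1)) k)) : ℕ :=
  sInf {d : ℕ | ∃ l : List (MvPolynomial (Fin (n+1)) k), l.length = i ∧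
    (∀ f ∈ l, f ∈ I) ∧ (∀ f ∈ l, ∃ e ≤ d, MvPolynomial.IsHomogeneous f e) ∧
    RingTheory.Sequence.IsRegular (MvPolynomial (Fin (n+1)) k) l}

/-- A minimal complete intersection inside a height-three homogeneous ideal `I`:
a regular sequence `f₁, f₂, f₃` of homogeneous elements of `I` with `deg fⱼ = a_j(I)`. -/
def IsMinCI (I : Ideal (MvPolynomial (Fin (n+1)) k)) (f₁ f₂ f₃ : MvPolynomial (Fin (n+1)) k) :
    Prop :=
  f₁ ∈ I ∧ f₂ ∈ I ∧ f₃ ∈ I ∧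
  MvPolynomial.IsHomogeneous f₁ (aDeg 1 I) ∧ MvPolynomial.IsHomogeneous f₂ (aDeg 2 I) ∧
  MvPolynomial.IsHomogeneous f₃ (aDeg 3 I) ∧
  RingTheory.Sequence.IsRegular (MvPolynomial (Fin (n+1)) k) [f₁, f₂, f₃]

lemma aux_height {f g h : MvPolynomial (Fin (n+1)) k}
    (hreg : RingTheory.Sequence.IsRegular (MvPolynomial (Fin (n+1)) k) [f, g, h])
    (P : Ideal (MvPolynomial (Fin (n+1)) k)) [hP : P.IsPrime]
    (hf : f ∈ P) (hg : g ∈ P) (hh : h ∈ P) : 3 ≤ P.height := by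
  have key : ∀ (I : Ideal (MvPolynomial (Fin (n+1)) k)) (x : MvPolynomial (Fin (n+1)) k)
      (hx : IsSMulRegular (MvPolynomial (Fin (n+1)) k ⧸
        (I • ⊤ : Submodule (MvPolynomial (Fin (n+1)) k) (MvPolynomial (Fin (n+1)) k))) x)
      (Q : Ideal (MvPolynomial (Fin (n+1)) k)) (_ : Q.IsPrime) (_ : I ≤ Q) (_ : x ∈ Q),
      ∃ Q' : Ideal (MvPolynomial (Fin (n+1)) k), Q'.IsPrime ∧ I ≤ Q' ∧ Q'.height + 1 ≤ Q.height ∧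
        Q' ≤ Q := by
    intro I x hx Q hQ hIQ hxQ
    obtain ⟨Q', hQ', hle⟩ := Ideal.exists_minimalPrimes_le hIQ
    haveI := hQ'.1.1
    refine ⟨Q', hQ'.1.1, hQ'.1.2, ?_, hle⟩
    apply Ideal.height_add_one_le_of_lt_of_isPrime
    refine lt_of_le_of_ne hle ?_
    rintro rfl
    refine IsSMulRegular.notMem_of_mem_minimalPrimes hx (p := Q') ?_ hxQ
    have e : Module.annihilator (MvPolynomial (Fin (n+1)) k) (MvPolynomial (Fin (n+1)) k ⧸
        (I • ⊤ : Submodule (MvPolynomial (Fin (n+1)) k) (MvPolynomial (Fin (n+1)) k))) = I := by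
      have : (I • ⊤ : Submodule (MvPolynomial (Fin (n+1)) k) (MvPolynomial (Fin (n+1)) k)) = I := by
        simp
      rw [this]
      exact Ideal.annihilator_quotient
    rw [e]; exact hQ'
  have h0 := hreg.toIsWeaklyRegular.regular_mod_prev 0 (by simp)
  have h1 := hreg.toIsWeaklyRegular.regular_mod_prev 1 (by simp)
  have h2 := hreg.toIsWeaklyRegular.regular_mod_prev 2 (by simp)
  obtain ⟨Q2, p2, i2, l2, m2⟩ := key _ _ h2 P hP (by
    simp [Ideal.ofList_cons, Ideal.span_le, hf, hg]) (by simpa using hh)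
  have a1 : f ∈ Q2 ∧ g ∈ Q2 := by
    simpa [Ideal.ofList_cons, Ideal.span_le] using i2
  obtain ⟨Q1, p1, i1, l1, m1⟩ := key _ _ h1 Q2 p2 (by
    simp [Ideal.ofList_cons, Ideal.span_le, a1.1]) (by simpa using a1.2)
  have a0 : f ∈ Q1 := by
    simpa [Ideal.ofList_cons, Ideal.span_le] using i1
  obtain ⟨Q0, p0, i0, l0, m0⟩ := key _ _ h0 Q1 p1 (by simp) (by simpa using a0)
  calc (3 : ℕ∞) ≤ Q0.height + 1 + 1 + 1 := by
        rw [add_assoc, add_assoc]; exact le_add_left (by norm_num)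
    _ ≤ Q1.height + 1 + 1 := by gcongr
    _ ≤ Q2.height + 1 := by gcongr
    _ ≤ P.height := l2

lemma aux_not_le {F : Fin 3 → MvPolynomial (Fin (n+1)) k}
    (hreg : RingTheory.Sequence.IsRegular (MvPolynomial (Fin (n+1)) k) [F 0, F 1, F 2])
    (S : Finset (MvPolynomial (Fin (n+1)) k)) (hS : S.card < 3)
    (hc : ∀ s ∈ S, constantCoeff s = 0)
    (hF : ∀ i, F i ∈ Ideal.span (S : Set (MvPolynomial (Fin (n+1)) k))) : False := by
  have hne : Ideal.span (S : Set (MvPolynomial (Fin (n+1)) k)) ≠ ⊤ := by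
    intro ht
    have : Ideal.span (S : Set (MvPolynomial (Fin (n+1)) k)) ≤
        RingHom.ker (constantCoeff (R := k) (σ := Fin (n+1))) := by
      rw [Ideal.span_le]
      intro s hs
      exact hc s hs
    rw [ht] at this
    have h1 := this (x := 1) trivial
    rw [RingHom.mem_ker] at h1
    simp at h1
  obtain ⟨P, hP⟩ := Ideal.nonempty_minimalPrimes hne
  haveI := hP.1.1
  have h1 := Ideal.height_le_card_of_mem_minimalPrimes_span_finset hP
  have h2 := aux_height hreg P (hP.1.2 (hF 0)) (hP.1.2 (hF 1)) (hP.1.2 (hF 2))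
  have h3 := h2.trans h1
  have : 3 ≤ S.card := by exact_mod_cast h3
  omega

lemma aux_cc {f : MvPolynomial (Fin (n+1)) k} {d : ℕ} (hf : f.IsHomogeneous d) (hd : 0 < d) :
    constantCoeff f = 0 := by
  rw [constantCoeff_eq]
  apply hf.coeff_eq_zero
  simp; omega

lemma aux_comp (a f : MvPolynomial (Fin (n+1)) k) (d e : ℕ) (hf : f.IsHomogeneous d) :
    homogeneousComponent e (a * f) =
      (if d ≤ e then homogeneousComponent (e - d) a else 0) * f := by
  have ha := sum_homogeneousComponent a
  conv_lhs => rw [← ha]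
  rw [Finset.sum_mul, map_sum]
  have : ∀ i ∈ Finset.range (a.totalDegree + 1),
      homogeneousComponent e (homogeneousComponent i a * f) =
      if i + d = e then homogeneousComponent i a * f else 0 := by
    intro i _
    rw [homogeneousComponent_of_mem ((homogeneousComponent_isHomogeneous i a).mul hf)]
    simp only [eq_comm]
  rw [Finset.sum_congr rfl this]
  split_ifs with hde
  · rw [Finset.sum_eq_single (e - d)]
    · simp [hde]
    · intro i _ hi
      rw [if_neg (by omega)]
    · intro hi
      rw [homogeneousComponent_eq_zero _ _ (by rw [Finset.mem_range] at hi; omega)]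
      simp
  · rw [zero_mul]
    apply Finset.sum_eq_zero
    intro i _
    rw [if_neg (by omega)]

lemma aux_matrix {F F' : Fin 3 → MvPolynomial (Fin (n+1)) k} {d d' : Fin 3 → ℕ}
    (hF : ∀ i, (F i).IsHomogeneous (d i)) (hF' : ∀ i, (F' i).IsHomogeneous (d' i))
    (hle : ∀ i, F' i ∈ Ideal.span (Set.range F)) :
    ∃ A : Matrix (Fin 3) (Fin 3) (MvPolynomial (Fin (n+1)) k),
      (∀ i, F' i = ∑ j, A i j * F j) ∧ (∀ i j, A i j ≠ 0 → d j ≤ d' i) ∧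
      (∀ i j, (A i j).IsHomogeneous (d' i - d j)) := by
  have : ∀ i, ∃ c : Fin 3 → MvPolynomial (Fin (n+1)) k, ∑ j, c j * F j = F' i := by
    intro i
    exact Ideal.mem_span_range_iff_exists_fun.1 (hle i)
  choose c hc using this
  refine ⟨fun i j => if d j ≤ d' i then homogeneousComponent (d' i - d j) (c i j) else 0,
    ?_, ?_, ?_⟩
  · intro i
    have h1 : homogeneousComponent (d' i) (F' i) = F' i := by
      rw [homogeneousComponent_of_mem (hF' i), if_pos rfl]
    rw [← h1, ← hc i, map_sum]
    exact Finset.sum_congr rfl fun j _ => aux_comp _ _ _ _ (hF j)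
  · intro i j h
    by_contra hn
    simp [hn] at h
  · intro i j
    dsimp only
    split_ifs
    · exact homogeneousComponent_isHomogeneous _ _
    · exact isHomogeneous_zero _ _ _

open Classical in
lemma aux_perm {F F' : Fin 3 → MvPolynomial (Fin (n+1)) k} {d d' : Fin 3 → ℕ}
    (hF : ∀ i, (F i).IsHomogeneous (d i)) (hF' : ∀ i, (F' i).IsHomogeneous (d' i))
    (hd : ∀ i, 0 < d i) (hd' : ∀ i, 0 < d' i)
    (hreg : RingTheory.Sequence.IsRegular (MvPolynomial (Fin (n+1)) k) [F' 0, F' 1, F' 2])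
    (hprod : ∏ i, d' i = ∏ i, d i)
    (hle : ∀ i, F' i ∈ Ideal.span (Set.range F)) :
    ∃ σ : Equiv.Perm (Fin 3), ∀ i, d' i = d (σ i) := by
  obtain ⟨A, hA, hA1, hA2⟩ := aux_matrix hF hF' hle
  have hall := (Finset.all_card_le_biUnion_card_iff_exists_injective
    (fun i : Fin 3 => Finset.univ.filter fun j => A i j ≠ 0)).1 (by
      intro s
      by_contra hlt
      push Not at hlt
      set N := s.biUnion (fun i : Fin 3 => Finset.univ.filter fun j => A i j ≠ 0) with hN
      refine aux_not_le hreg (N.image F ∪ sᶜ.image F') ?_ ?_ ?_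
      · have h1 := Finset.card_union_le (N.image F) (sᶜ.image F')
        have h2 : (N.image F).card ≤ N.card := Finset.card_image_le
        have h3 : (sᶜ.image F').card ≤ sᶜ.card := Finset.card_image_le
        have h4 := Finset.card_compl_add_card s
        simp only [Fintype.card_fin] at h4
        omega
      · intro x hx
        rw [Finset.mem_union, Finset.mem_image, Finset.mem_image] at hx
        rcases hx with ⟨i, _, rfl⟩ | ⟨i, _, rfl⟩
        · exact aux_cc (hF i) (hd i)
        · exact aux_cc (hF' i) (hd' i)
      · intro i
        by_cases hi : i ∈ s
        · rw [hA i]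
          refine Ideal.sum_mem _ fun j _ => ?_
          by_cases hij : A i j = 0
          · simp [hij]
          · apply Ideal.mul_mem_left
            apply Ideal.subset_span
            rw [Finset.mem_coe, Finset.mem_union, Finset.mem_image]
            refine Or.inl ⟨j, ?_, rfl⟩
            rw [hN, Finset.mem_biUnion]
            exact ⟨i, hi, by simp [hij]⟩
        · apply Ideal.subset_span
          rw [Finset.mem_coe, Finset.mem_union, Finset.mem_image, Finset.mem_image]
          exact Or.inr ⟨i, by simpa using hi, rfl⟩)
  obtain ⟨s, hs, hs2⟩ := hall
  refine ⟨Equiv.ofBijective s (Finite.injective_iff_bijective.1 hs), ?_⟩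
  have hge : ∀ i, d (s i) ≤ d' i := fun i => hA1 _ _ (by simpa using hs2 i)
  have hp : ∏ i, d (s i) = ∏ i, d i :=
    Equiv.prod_comp (Equiv.ofBijective s (Finite.injective_iff_bijective.1 hs)) d
  intro i
  by_contra hne
  have hlt : d (s i) < d' i := lt_of_le_of_ne (hge i) (fun h => hne h.symm)
  have := Finset.prod_lt_prod (s := Finset.univ) (f := fun i => d (s i)) (g := d')
    (fun i _ => hd _) (fun i _ => hge i) ⟨i, Finset.mem_univ _, hlt⟩
  omega

open Classical in
lemma aux_core {F F' : Fin 3 → MvPolynomial (Fin (n+1)) k} {d : Fin 3 → ℕ}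
    (hF : ∀ i, (F i).IsHomogeneous (d i)) (hF' : ∀ i, (F' i).IsHomogeneous (d i))
    (hd : ∀ i, 0 < d i)
    (hreg : RingTheory.Sequence.IsRegular (MvPolynomial (Fin (n+1)) k) [F' 0, F' 1, F' 2])
    (hle : ∀ i, F' i ∈ Ideal.span (Set.range F)) (j : Fin 3) :
    F j ∈ Ideal.span (Set.range F') := by
  obtain ⟨A, hA, hA1, hA2⟩ := aux_matrix hF hF' hle
  have hdet : A.det.IsHomogeneous 0 := by
    rw [Matrix.det_apply]
    apply IsHomogeneous.sum
    intro τ _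
    have hpr : (∏ i, A (τ i) i).IsHomogeneous 0 := by
      by_cases hz : ∏ i, A (τ i) i = 0
      · rw [hz]; exact isHomogeneous_zero _ _ _
      · have hnz : ∀ i, d i ≤ d (τ i) := fun i =>
          hA1 _ _ (fun h => hz (Finset.prod_eq_zero (Finset.mem_univ i) h))
        have h0 : ∑ i, (d (τ i) - d i) = 0 := by
          have h1 : ∑ i, (d (τ i) - d i) + ∑ i, d i = ∑ i, d (τ i) := by
            rw [← Finset.sum_add_distrib]
            exact Finset.sum_congr rfl fun i _ => Nat.sub_add_cancel (hnz i)
          rw [Equiv.sum_comp τ d] at h1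
          omega
        rw [← h0]
        exact IsHomogeneous.prod _ _ _ fun i _ => hA2 _ _
    rcases Int.units_eq_one_or (Equiv.Perm.sign τ) with h | h
    · rw [h, one_smul]; exact hpr
    · rw [h, Units.neg_smul, one_smul]; exact hpr.neg
  have hC : A.det = C (constantCoeff A.det) := by
    rw [constantCoeff_eq]
    exact totalDegree_eq_zero_iff_eq_C.1 (Nat.le_zero.1 hdet.totalDegree_le)
  by_cases hz : constantCoeff A.det = 0
  · exfalso
    have hm : (A.map constantCoeff).det = 0 := by
      rw [← hz, RingHom.map_det]; rfl
    obtain ⟨v, hv, hvA⟩ := Matrix.exists_vecMul_eq_zero_iff.2 hm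
    obtain ⟨i0, hi0, hmax⟩ := Finset.exists_max_image (Finset.univ.filter fun i => v i ≠ 0) d (by
      obtain ⟨i, hi⟩ := Function.ne_iff.1 hv
      exact ⟨i, by simpa using hi⟩)
    simp only [Finset.mem_filter, Finset.mem_univ, true_and] at hi0 hmax
    set L := Finset.univ.filter fun j => d j < d i0 with hL
    set T := (Finset.univ.filter fun j => ¬ d j < d i0).erase i0 with hT
    have hB : ∀ j, ¬ d j < d i0 → ∑ i, C (v i) * A i j = 0 := by
      intro j hj
      have hconst : ∀ i, C (v i) * A i j = C (v i * constantCoeff (A i j)) := by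
        intro i
        by_cases hvi : v i = 0
        · simp [hvi]
        by_cases hAij : A i j = 0
        · simp [hAij]
        have h1 := hA1 i j hAij
        have h2 := hmax i hvi
        have h3 := hA2 i j
        rw [show d i - d j = 0 by omega] at h3
        have h4 : A i j = C (constantCoeff (A i j)) := by
          rw [constantCoeff_eq]
          exact totalDegree_eq_zero_iff_eq_C.1 (Nat.le_zero.1 h3.totalDegree_le)
        rw [C_mul, ← h4]
      rw [Finset.sum_congr rfl fun i _ => hconst i, ← map_sum]
      have := congrFun hvA j
      simp only [Matrix.vecMul, dotProduct, Matrix.map_apply, Pi.zero_apply] at this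
      rw [this, C_0]
    have hcomb : ∑ i, C (v i) * F' i = ∑ j, (∑ i, C (v i) * A i j) * F j := by
      simp_rw [hA, Finset.mul_sum, Finset.sum_mul, mul_assoc]
      exact Finset.sum_comm
    have hFL : ∀ j, d j < d i0 → F j ∈ Ideal.span
        ((L.image F ∪ T.image F' : Finset (MvPolynomial (Fin (n+1)) k)) :
          Set (MvPolynomial (Fin (n+1)) k)) := by
      intro j hj
      apply Ideal.subset_span
      rw [Finset.mem_coe, Finset.mem_union, Finset.mem_image]
      exact Or.inl ⟨j, by simp [hL, hj], rfl⟩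
    have hFne : ∀ i, i ≠ i0 → F' i ∈ Ideal.span
        ((L.image F ∪ T.image F' : Finset (MvPolynomial (Fin (n+1)) k)) :
          Set (MvPolynomial (Fin (n+1)) k)) := by
      intro i hi
      by_cases hlt : d i < d i0
      · rw [hA i]
        refine Ideal.sum_mem _ fun j _ => ?_
        by_cases hij : A i j = 0
        · simp [hij]
        · exact Ideal.mul_mem_left _ _ (hFL j (lt_of_le_of_lt (hA1 i j hij) hlt))
      · apply Ideal.subset_span
        rw [Finset.mem_coe, Finset.mem_union, Finset.mem_image, Finset.mem_image]
        exact Or.inr ⟨i, by simp only [hT, Finset.mem_erase, Finset.mem_filter]; simp [hi, hlt], rfl⟩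
    refine aux_not_le hreg (L.image F ∪ T.image F') ?_ ?_ ?_
    · have h1 := Finset.card_union_le (L.image F) (T.image F')
      have h2 : (L.image F).card ≤ L.card := Finset.card_image_le
      have h3 : (T.image F').card ≤ T.card := Finset.card_image_le
      have h4 : L.card + (Finset.univ.filter fun j => ¬ d j < d i0).card = 3 := by
        rw [hL, Finset.card_filter_add_card_filter_not]; simp
      have h5 : T.card < (Finset.univ.filter fun j => ¬ d j < d i0).card :=
        Finset.card_erase_lt_of_mem (by simp)
      omega
    · intro x hx
      rw [Finset.mem_union, Finset.mem_image, Finset.mem_image] at hx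
      rcases hx with ⟨i, _, rfl⟩ | ⟨i, _, rfl⟩
      · exact aux_cc (hF i) (hd i)
      · exact aux_cc (hF' i) (hd i)
    · intro i
      by_cases hi : i = i0
      · subst hi
        have h1 : C (v i) * F' i ∈ Ideal.span
            ((L.image F ∪ T.image F' : Finset (MvPolynomial (Fin (n+1)) k)) :
              Set (MvPolynomial (Fin (n+1)) k)) := by
          have h2 : C (v i) * F' i = ∑ j, (∑ i, C (v i) * A i j) * F j -
              ∑ l ∈ Finset.univ.erase i, C (v l) * F' l := by
            rw [← hcomb, ← Finset.add_sum_erase _ _ (Finset.mem_univ i)]; ring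
          rw [h2]
          apply Ideal.sub_mem
          · refine Ideal.sum_mem _ fun j _ => ?_
            by_cases hj : d j < d i
            · exact Ideal.mul_mem_left _ _ (hFL j hj)
            · rw [hB j hj]; simp
          · refine Ideal.sum_mem _ fun l hl => ?_
            exact Ideal.mul_mem_left _ _ (hFne l (Finset.ne_of_mem_erase hl))
        have h3 : F' i = C (v i)⁻¹ * (C (v i) * F' i) := by
          rw [← mul_assoc, ← C_mul, inv_mul_cancel₀ hi0, C_1, one_mul]
        rw [h3]
        exact Ideal.mul_mem_left _ _ h1
      · exact hFne i hi
  · have hvec : A.mulVec F = F' := by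
      funext i
      simp [Matrix.mulVec, dotProduct, hA i]
    have hadj : A.det • F = A.adjugate.mulVec F' := by
      rw [← hvec, Matrix.mulVec_mulVec, Matrix.adjugate_mul, Matrix.smul_mulVec, Matrix.one_mulVec]
    have hj := congrFun hadj j
    simp only [Pi.smul_apply, smul_eq_mul, Matrix.mulVec, dotProduct] at hj
    have h3 : F j = C (constantCoeff A.det)⁻¹ * (A.det * F j) := by
      conv_rhs => rw [hC]
      rw [← mul_assoc, ← C_mul]
      simp [hz]
    rw [h3, hj]
    apply Ideal.mul_mem_left
    exact Ideal.sum_mem _ fun l _ => Ideal.mul_mem_left _ _ (Ideal.subset_span ⟨l, rfl⟩)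


/-- A height-three complete intersection contained in another one of the same degree is
equal to it. -/
theorem stmt_7 (f g h f' g' h' : MvPolynomial (Fin (n+1)) k)
    (df dg dh df' dg' dh' : ℕ)
    (hdf : 0 < df) (hdg : 0 < dg) (hdh : 0 < dh)
    (hdf' : 0 < df') (hdg' : 0 < dg') (hdh' : 0 < dh')
    (hfhom : MvPolynomial.IsHomogeneous f df) (hghom : MvPolynomial.IsHomogeneous g dg)
    (hhhom : MvPolynomial.IsHomogeneous h dh)
    (hfhom' : MvPolynomial.IsHomogeneous f' df') (hghom' : MvPolynomial.IsHomogeneous g' dg')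
    (hhhom' : MvPolynomial.IsHomogeneous h' dh')
    (hreg : RingTheory.Sequence.IsRegular (MvPolynomial (Fin (n+1)) k) [f, g, h])
    (hreg' : RingTheory.Sequence.IsRegular (MvPolynomial (Fin (n+1)) k) [f', g', h'])
    (hsub : Ideal.span {f', g', h'} ≤ (Ideal.span {f, g, h} : Ideal (MvPolynomial (Fin (n+1)) k)))
    (hdeg : df' * dg' * dh' = df * dg * dh) :
    Ideal.span {f', g', h'} = (Ideal.span {f, g, h} : Ideal (MvPolynomial (Fin (n+1)) k)) := by
  have hr : ∀ a b c : MvPolynomial (Fin (n+1)) k, Set.range ![a, b, c] = {a, b, c} := by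
    intro a b c
    ext x; simp [eq_comm]; tauto
  have hF : ∀ i, (![f, g, h] i).IsHomogeneous (![df, dg, dh] i) := by
    intro i; fin_cases i <;> simpa
  have hF' : ∀ i, (![f', g', h'] i).IsHomogeneous (![df', dg', dh'] i) := by
    intro i; fin_cases i <;> simpa
  have hd : ∀ i, 0 < ![df, dg, dh] i := by
    intro i; fin_cases i <;> simpa
  have hd' : ∀ i, 0 < ![df', dg', dh'] i := by
    intro i; fin_cases i <;> simpa
  have hle : ∀ i, ![f', g', h'] i ∈ Ideal.span (Set.range ![f, g, h]) := by
    intro i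
    rw [hr]
    apply hsub
    rw [← hr]
    exact Ideal.subset_span ⟨i, rfl⟩
  obtain ⟨σ, hσ⟩ := aux_perm hF hF' hd hd' (by simpa using hreg')
    (by simpa [Fin.prod_univ_three] using hdeg) hle
  apply le_antisymm hsub
  rw [← hr, ← hr, Ideal.span_le]
  rintro _ ⟨i, rfl⟩
  have := aux_core (F := fun i => ![f, g, h] (σ i)) (F' := ![f', g', h']) (d := ![df', dg', dh'])
    (fun i => by rw [hσ i]; exact hF (σ i)) hF' hd' (by simpa using hreg')
    (fun i => by
      have e : Set.range (fun i => ![f, g, h] (σ i)) = Set.range ![f, g, h] :=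
        σ.surjective.range_comp ![f, g, h]
      rw [e]; exact hle i) (σ.symm i)
  simpa using this

end
end

section
/- Let I be an arithmetically Gorenstein homogeneous ideal of height three in R. If I contains a nonzero homogeneous element of degree 1, then I is a complete intersection. Equivalently, if I is not a complete intersection, then every nonzero homogeneous element of I has degree at least 2. -/
/-
Common setup: `R = k[x₀,…,xₙ]` is the standard graded polynomial ring
`MvPolynomial (Fin (n+1)) k` over a field `k`.
-/

open CategoryTheory MvPolynomial RingTheory

noncomputable section

variable {k : Type} [Field k] {n : ℕ}

section Syzygy
open TensorProduct

lemma syz_projective_mk {A : Type} [CommRing A] {M : Type} [AddCommGroup M] [Module A M] :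
    HasProjectiveDimensionLE (ModuleCat.of A M) 0 ↔ Module.Projective A M := by
  rw [← projective_iff_hasProjectiveDimensionLE_zero, ← IsProjective.iff_projective]

lemma syz_ses {A : Type} [CommRing A] {M N P : Type} [AddCommGroup M] [Module A M]
    [AddCommGroup N] [Module A N] [AddCommGroup P] [Module A P]
    (f : M →ₗ[A] N) (g : N →ₗ[A] P) (hf : Function.Injective f) (hfg : Function.Exact f g)
    (hg : Function.Surjective g) :
    (ShortComplex.mk (ModuleCat.ofHom f) (ModuleCat.ofHom g)
      (by ext x; exact hfg.apply_apply_eq_zero x)).ShortExact where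
  exact := by
    rw [ShortComplex.ShortExact.moduleCat_exact_iff_function_exact]
    exact hfg
  mono_f := (ModuleCat.mono_iff_injective _).2 hf
  epi_g := (ModuleCat.epi_iff_surjective _).2 hg

lemma syz_baseChange {A : Type} [CommRing A] (B : Type) [CommRing B] [Algebra A B] [Module.Flat A B]
    (n : ℕ) : ∀ (M : Type) [AddCommGroup M] [Module A M],
    HasProjectiveDimensionLE (ModuleCat.of A M) n →
    HasProjectiveDimensionLE (ModuleCat.of B (B ⊗[A] M)) n := by
  induction n with
  | zero =>
    intro M _ _ h
    rw [syz_projective_mk] at h ⊢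
    infer_instance
  | succ n ih =>
    intro M _ _ h
    let f : (M →₀ A) →ₗ[A] M := Finsupp.linearCombination A id
    have hf : Function.Surjective f := Finsupp.linearCombination_id_surjective A M
    have h1 := syz_ses (M := LinearMap.ker f) (LinearMap.ker f).subtype f Subtype.val_injective
      (LinearMap.exact_subtype_ker_map f) hf
    have h2 := syz_ses ((LinearMap.ker f).subtype.baseChange B) (f.baseChange B)
      (Module.Flat.lTensor_preserves_injective_linearMap _ Subtype.val_injective)
      (by
        have := lTensor_exact (M := LinearMap.ker f) (f := (LinearMap.ker f).subtype) B (LinearMap.exact_subtype_ker_map f) hf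
        exact this)
      (LinearMap.lTensor_surjective B hf)
    refine (h2.hasProjectiveDimensionLT_X₃_iff n ?_).2 (ih (LinearMap.ker f) ?_)
    · exact (IsProjective.iff_projective _).1 inferInstance
    · exact (h1.hasProjectiveDimensionLT_X₃_iff n
        ((IsProjective.iff_projective _).1 inferInstance)).1 h

variable {A : Type} [CommRing A] {M : Type} [AddCommGroup M] [Module A M]
  [Module (Polynomial A) M] [IsScalarTower A (Polynomial A) M]

open scoped Polynomial in
lemma syz_poly (n : ℕ) (h : HasProjectiveDimensionLE (ModuleCat.of A M) n) :
    HasProjectiveDimensionLE (ModuleCat.of A[X] M) (n + 1) := by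
  let x : M →ₗ[A] M := (LinearMap.lsmul A[X] M Polynomial.X).restrictScalars A
  have hx : ∀ m, x m = (Polynomial.X : A[X]) • m := fun m ↦ rfl
  let T := A[X] ⊗[A] M
  let D : A[X] ⊗[A] M →ₗ[A[X]] A[X] ⊗[A] M :=
    (Polynomial.X : A[X]) • LinearMap.id - x.baseChange A[X]
  let μ : A[X] ⊗[A] M →ₗ[A[X]] M := (LinearMap.id : M →ₗ[A] M).liftBaseChange A[X]
  let e := PolynomialModule.polynomialTensorProductLEquivPolynomialModule (R := A) (M := M)
  have hμ : ∀ p m, μ (p ⊗ₜ m) = p • m := fun p m ↦ by simp [μ]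
  have hD : ∀ p m, D (p ⊗ₜ m) = (Polynomial.X * p) ⊗ₜ m - p ⊗ₜ ((Polynomial.X : A[X]) • m) := fun p m ↦ by
    simp [D, hx, TensorProduct.smul_tmul']
  have hcomp : ∀ t, μ (D t) = 0 := by
    intro t
    induction t with
    | zero => simp
    | add a b ha hb => simp [ha, hb]
    | tmul p m => rw [hD, map_sub, hμ, hμ, smul_smul, mul_comm, sub_self]
  have hone : ∀ t, t - (1 : A[X]) ⊗ₜ[A] μ t ∈ LinearMap.range D := by
    intro t
    induction t with
    | zero => simp
    | add a b ha hb =>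
      convert add_mem ha hb using 1
      rw [map_add, tmul_add]; abel
    | tmul p m =>
      rw [hμ]
      induction p using Polynomial.induction_on' generalizing m with
      | add p q hp hq =>
        convert add_mem (hp m) (hq m) using 1
        rw [add_smul, tmul_add, add_tmul]; abel
      | monomial i a =>
        induction i generalizing m with
        | zero =>
          have : (Polynomial.monomial 0 a : A[X]) = a • 1 := by simp [Polynomial.smul_eq_C_mul]
          rw [this, smul_tmul, smul_assoc, one_smul, sub_self]
          exact zero_mem _
        | succ i ih =>
          have h1 : (Polynomial.monomial (i+1) a : A[X]) = Polynomial.X * Polynomial.monomial i a := by simp 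
          convert add_mem (ih ((Polynomial.X : A[X]) • m)) (LinearMap.mem_range_self D (Polynomial.monomial i a ⊗ₜ m))
            using 1
          rw [hD, h1, smul_smul, mul_comm Polynomial.X]
          abel
  have hinj : Function.Injective D := by
    rw [injective_iff_map_eq_zero]
    intro t ht
    have hX : ∀ (q : PolynomialModule A M) n, ((Polynomial.X : A[X]) • q).coeff (n+1) = q.coeff n := by
      intro q n
      rw [← Polynomial.monomial_one_one_eq_X, PolynomialModule.monomial_smul_apply]
      simp
    have hb : ∀ t n, (e (x.baseChange A[X] t)).coeff n = x ((e t).coeff n) := by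
      intro t n
      induction t with
      | zero => simp
      | add a b ha hb => simp [ha, hb]
      | tmul p m =>
        simp only [LinearMap.baseChange_tmul]
        have he : ∀ (p : A[X]) (m : M), e (p ⊗ₜ m) = p • PolynomialModule.single A 0 m :=
          fun p m ↦ by
            simp [e, PolynomialModule.polynomialTensorProductLEquivPolynomialModule]
            rfl
        rw [he, he, PolynomialModule.smul_single_apply, PolynomialModule.smul_single_apply]
        simp
    have hrec : ∀ n, (e t).coeff n = x ((e t).coeff (n+1)) := by
      intro n
      have : (Polynomial.X : A[X]) • t = x.baseChange A[X] t := by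
        simpa [D, sub_eq_zero] using ht
      rw [← hb, ← this, map_smul, hX]
    have hz : ∀ j n, (e t).coeff (n + j) = 0 → (e t).coeff n = 0 := by
      intro j
      induction j with
      | zero => intro n hn; exact hn
      | succ j ih =>
        intro n hn
        apply ih
        rw [hrec, add_assoc, hn, map_zero]
    have : e t = 0 := by
      ext n
      obtain ⟨N, hN⟩ := (e t).coeff.support.exists_nat_subset_range
      refine hz N n ?_
      by_contra hc
      have := hN (Finsupp.mem_support_iff.2 hc)
      simp at this
    simpa using this
  have hex : Function.Exact D μ := by
    intro t
    refine ⟨fun ht ↦ ?_, ?_⟩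
    · have := hone t
      rw [ht, tmul_zero, sub_zero] at this
      exact this
    · rintro ⟨t, rfl⟩
      exact hcomp t
  have hs : Function.Surjective μ := fun m ↦ ⟨1 ⊗ₜ m, by simp [hμ]⟩
  have hses := syz_ses D μ hinj hex hs
  have hT := syz_baseChange A[X] n M h
  exact hses.hasProjectiveDimensionLT_X₃ (n+1) hT
    (hasProjectiveDimensionLT_of_ge (ModuleCat.of A[X] (A[X] ⊗[A] M)) (n+1) _ (by omega))

lemma syz_mvPoly (k : Type) [Field k] (n : ℕ) :
    ∀ (M : Type) [AddCommGroup M] [Module (MvPolynomial (Fin n) k) M],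
    HasProjectiveDimensionLE (ModuleCat.of (MvPolynomial (Fin n) k) M) n := by
  induction n with
  | zero =>
    intro M _ _
    let e : k ≃+* MvPolynomial (Fin 0) k := (MvPolynomial.isEmptyRingEquiv k (Fin 0)).symm
    have hF : IsField (MvPolynomial (Fin 0) k) := MulEquiv.isField (Field.toIsField k) e.symm.toMulEquiv
    let := hF.toField
    rw [syz_projective_mk]
    infer_instance
  | succ n ih =>
    intro M _ _
    let e : Polynomial (MvPolynomial (Fin n) k) ≃+* MvPolynomial (Fin (n+1)) k :=
      (MvPolynomial.finSuccEquiv k n).symm.toRingEquiv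
    let : Module (Polynomial (MvPolynomial (Fin n) k)) M :=
      Module.compHom M (e : Polynomial (MvPolynomial (Fin n) k) →+* MvPolynomial (Fin (n+1)) k)
    let : Module (MvPolynomial (Fin n) k) M :=
      Module.compHom M (Polynomial.C : MvPolynomial (Fin n) k →+* _)
    have : IsScalarTower (MvPolynomial (Fin n) k) (Polynomial (MvPolynomial (Fin n) k)) M :=
      ⟨fun a p m ↦ by
        change _ = (Polynomial.C a) • (p • m)
        rw [smul_smul, Polynomial.smul_eq_C_mul]⟩
    have := syz_poly (A := MvPolynomial (Fin n) k) (M := M) n (ih M)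
    let := RingHomInvPair.of_ringEquiv e
    let := RingHomInvPair.of_ringEquiv e.symm
    let e' : M ≃ₛₗ[RingHomClass.toRingHom e] M :=
      { AddEquiv.refl M with
        map_smul' := fun p m ↦ rfl }
    exact ModuleCat.hasProjectiveDimensionLE_of_semiLinearEquiv
      (M := ModuleCat.of (Polynomial (MvPolynomial (Fin n) k)) M)
      (N := ModuleCat.of (MvPolynomial (Fin (n+1)) k) M) e e' (n+1)
end Syzygy


section ExtTransfer
variable {R : Type} [CommRing R]

lemma oldExt_equiv (X Y : ModuleCat.{0} R) (P : ProjectiveResolution X) (n : ℕ) :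
    Nonempty ((((Ext R (ModuleCat.{0} R) (n+1)).obj (Opposite.op X)).obj Y) ≃ₗ[R]
      (LinearMap.ker ((P.complex.linearYonedaObj R Y).sc' n (n+1) (n+2)).g.hom ⧸
        LinearMap.range ((P.complex.linearYonedaObj R Y).sc' n (n+1) (n+2)).moduleCatToCycles)) := by
  have i1 := P.isoExt (R := R) (n+1) Y
  have i2 := (P.complex.linearYonedaObj R Y).homologyIsoSc' n (n+1) (n+2) (by simp) (by simp)
  have i3 := ((P.complex.linearYonedaObj R Y).sc' n (n+1) (n+2)).moduleCatHomologyIso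
  exact ⟨(i1 ≪≫ i2 ≪≫ i3).toLinearEquiv⟩

lemma newExt_vanish (X Y : ModuleCat.{0} R) (n : ℕ)
    (h : Subsingleton (((Ext R (ModuleCat.{0} R) (n+1)).obj (Opposite.op X)).obj Y))
    (α : Abelian.Ext X Y (n+1)) : α = 0 := by
  let P := projectiveResolution X
  obtain ⟨e⟩ := oldExt_equiv X Y P n
  obtain ⟨f, hf, rfl⟩ := P.extMk_surjective α (n+2) rfl
  rw [P.extMk_eq_zero_iff f (n+2) rfl hf n rfl]
  let K := (P.complex.linearYonedaObj R Y).sc' n (n+1) (n+2)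
  let z : LinearMap.ker K.g.hom := ⟨f, hf⟩
  have hs : Subsingleton (LinearMap.ker K.g.hom ⧸ LinearMap.range K.moduleCatToCycles) := e.symm.subsingleton
  have hz : (Submodule.Quotient.mk z : _ ⧸ LinearMap.range K.moduleCatToCycles) = 0 :=
    hs.elim _ _
  rw [Submodule.Quotient.mk_eq_zero] at hz
  obtain ⟨g, hg⟩ := hz
  exact ⟨g, congrArg Subtype.val hg⟩

lemma newExt_cyclic (X Y : ModuleCat.{0} R) (n : ℕ)
    (h : ∃ m : (((Ext R (ModuleCat.{0} R) (n+1)).obj (Opposite.op X)).obj Y),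
      Submodule.span R {m} = ⊤) :
    ∃ α : Abelian.Ext X Y (n+1), ∀ β : Abelian.Ext X Y (n+1), ∃ r : R, β = r • α := by
  let P := projectiveResolution X
  obtain ⟨e⟩ := oldExt_equiv X Y P n
  obtain ⟨m, hm⟩ := h
  let K := (P.complex.linearYonedaObj R Y).sc' n (n+1) (n+2)
  obtain ⟨z0, hz0⟩ := Submodule.Quotient.mk_surjective (LinearMap.range K.moduleCatToCycles) (e m)
  let f0 : P.complex.X (n+1) ⟶ Y := z0.1
  have hf0 : P.complex.d (n+2) (n+1) ≫ f0 = 0 := z0.2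
  refine ⟨P.extMk f0 (n+2) rfl hf0, fun β ↦ ?_⟩
  obtain ⟨f, hf, rfl⟩ := P.extMk_surjective β (n+2) rfl
  let z : LinearMap.ker K.g.hom := ⟨f, hf⟩
  have h1 : e.symm (Submodule.Quotient.mk z : _ ⧸ LinearMap.range K.moduleCatToCycles) ∈
    Submodule.span R {m} := hm ▸ Submodule.mem_top
  obtain ⟨r, hr⟩ := Submodule.mem_span_singleton.1 h1
  refine ⟨r, ?_⟩
  have h2 : (Submodule.Quotient.mk z : _ ⧸ LinearMap.range K.moduleCatToCycles) =
      r • Submodule.Quotient.mk z0 := by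
    have h3 := congrArg e hr
    rw [LinearEquiv.apply_symm_apply, map_smul] at h3
    rw [hz0]; exact h3.symm
  rw [← Submodule.Quotient.mk_smul, Submodule.Quotient.eq] at h2
  obtain ⟨g, hg⟩ := h2
  have hg' : P.complex.d (n+1) n ≫ g = f - r • f0 := congrArg Subtype.val hg
  rw [Abelian.Ext.smul_eq_comp_mk₀, P.extMk_comp_mk₀, ← sub_eq_zero, P.sub_extMk,
    P.extMk_eq_zero_iff _ (n+2) rfl _ n rfl]
  refine ⟨g, ?_⟩
  rw [hg', Linear.comp_smul, Category.comp_id]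

end ExtTransfer



section AbsExt
open Abelian (Ext)
variable {R S : Type} [CommRing R] [CommRing S] [Algebra R S]

/-- `S = R/ℓ` with `ℓ` a nonzerodivisor. -/
structure HypQuot (R S : Type) [CommRing R] [CommRing S] [Algebra R S] (ℓ : R) : Prop where
  dom : IsDomain R
  surj : Function.Surjective (algebraMap R S)
  ker : ∀ r : R, algebraMap R S r = 0 ↔ ∃ t, ℓ * t = r
  ne : ℓ ≠ 0

lemma hq_ses {ℓ : R} (h : HypQuot R S ℓ) :
    (ShortComplex.mk (ModuleCat.ofHom (LinearMap.lsmul R R ℓ))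
      (ModuleCat.ofHom (Algebra.linearMap R S)) (by
        ext
        simp only [ModuleCat.hom_comp, ModuleCat.hom_ofHom, LinearMap.comp_apply,
          LinearMap.lsmul_apply, Algebra.linearMap_apply, ModuleCat.hom_zero,
          LinearMap.zero_apply, smul_eq_mul]
        exact (h.ker _).2 ⟨_, rfl⟩)).ShortExact := by
  have := h.dom
  refine syz_ses (LinearMap.lsmul R R ℓ) (Algebra.linearMap R S) ?_ ?_ h.surj
  · intro a b hab
    exact mul_left_cancel₀ h.ne hab
  · intro r
    exact h.ker r

/-- The connecting class in `Ext¹(S, R)`. -/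
def hqClass {ℓ : R} (h : HypQuot R S ℓ) : Ext (ModuleCat.of R S) (ModuleCat.of R R) 1 :=
  (hq_ses h).extClass

lemma hq_inj {ℓ : R} (h : HypQuot R S ℓ) (N : ModuleCat.{0} R) (hN : ∀ x : N, ℓ • x = 0)
    (f : N ⟶ ModuleCat.of R S) (hf : (Ext.mk₀ f).comp (hqClass h) (zero_add 1) = 0) : f = 0 := by
  have := h.dom
  obtain ⟨x, hx⟩ := Ext.covariant_sequence_exact₃ N (hq_ses h) (Ext.mk₀ f) (zero_add 1) hf
  obtain ⟨g, rfl⟩ := (Ext.mk₀_bijective _ _).2 x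
  have hg : g = 0 := by
    ext y
    have h1 : ℓ * g.hom y = 0 := by
      rw [← smul_eq_mul]
      exact (map_smul g.hom ℓ y).symm.trans (by rw [hN]; exact map_zero g.hom)
    exact (mul_eq_zero.1 h1).resolve_left h.ne
  rw [hg, Ext.mk₀_zero, Ext.zero_comp] at hx
  exact (Ext.mk₀_bijective _ _).1 (by rw [← hx, Ext.mk₀_zero])

lemma hq_surj {ℓ : R} (h : HypQuot R S ℓ) (N : ModuleCat.{0} R) (hN : ∀ x : N, ℓ • x = 0)
    (x : Ext N (ModuleCat.of R R) 1) :
    ∃ f : N ⟶ ModuleCat.of R S, (Ext.mk₀ f).comp (hqClass h) (zero_add 1) = x := by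
  have h1 : ModuleCat.ofHom (LinearMap.lsmul R R ℓ) = ℓ • 𝟙 (ModuleCat.of R R) := by
    ext; simp
  have h2 : ℓ • 𝟙 N = 0 := by
    ext y; exact hN y
  have h3 : x.comp (Ext.mk₀ (ModuleCat.ofHom (LinearMap.lsmul R R ℓ))) (add_zero 1) = 0 := by
    rw [h1, ← Ext.smul_eq_comp_mk₀, ← Ext.mk₀_id_comp x, ← Ext.smul_comp, ← Ext.mk₀_smul, h2,
      Ext.mk₀_zero, Ext.zero_comp]
  obtain ⟨y, hy⟩ := Ext.covariant_sequence_exact₁ N (hq_ses h) x h3 (zero_add 1)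
  obtain ⟨g, rfl⟩ := (Ext.mk₀_bijective _ _).2 y
  exact ⟨g, hy⟩

lemma ext_shift {T : ShortComplex (ModuleCat.{0} R)} (hT : T.ShortExact) (Y : ModuleCat.{0} R)
    (i : ℕ) (h2 : ∀ x : Ext T.X₂ Y i, x = 0) (h3 : ∀ x : Ext T.X₃ Y (i+1), x = 0)
    (x : Ext T.X₁ Y i) : x = 0 := by
  obtain ⟨y, rfl⟩ := Ext.contravariant_sequence_exact₁ hT Y x (add_comm 1 i) (h3 _)
  rw [h2 y, Ext.comp_zero]

lemma hq_lift {ℓ : R} (h : HypQuot R S ℓ) {T : ShortComplex (ModuleCat.{0} R)} (hT : T.ShortExact)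
    (h1 : ∀ x : T.X₁, ℓ • x = 0) (h2 : ∀ x : T.X₂, ℓ • x = 0)
    (f : T.X₁ ⟶ ModuleCat.of R S)
    (hf : hT.extClass.comp ((Ext.mk₀ f).comp (hqClass h) (zero_add 1)) (rfl : 1 + 1 = 2) = 0) :
    ∃ g : T.X₂ ⟶ ModuleCat.of R S, T.f ≫ g = f := by
  obtain ⟨y, hy⟩ := Ext.contravariant_sequence_exact₁ hT _ _ _ hf
  obtain ⟨g, rfl⟩ := hq_surj h _ h2 y
  refine ⟨g, ?_⟩
  rw [← sub_eq_zero]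
  apply hq_inj h _ h1
  have e : T.f ≫ g - f = T.f ≫ g + (-1 : R) • f := by rw [neg_smul, one_smul, sub_eq_add_neg]
  rw [e, Ext.mk₀_add, Ext.add_comp, Ext.mk₀_smul, Ext.smul_comp, ← hy, Ext.mk₀_comp_mk₀_assoc,
    neg_smul, one_smul, add_neg_cancel]

lemma hq_cyclic {ℓ : R} (h : HypQuot R S ℓ) {T1 T2 U1 U2 U3 : ModuleCat.{0} R}
    (tf : T1 ⟶ T2) (tg : T2 ⟶ U1) (tz : tf ≫ tg = 0) (uf : U1 ⟶ U2) (ug : U2 ⟶ U3)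
    (uz : uf ≫ ug = 0)
    (hT : (ShortComplex.mk tf tg tz).ShortExact) (hU : (ShortComplex.mk uf ug uz).ShortExact)
    (h1 : ∀ x : T1, ℓ • x = 0) (h2 : ∀ x : T2, ℓ • x = 0)
    (v2 : ∀ x : Ext T2 (ModuleCat.of R R) 2, x = 0)
    (w2 : ∀ x : Ext U2 (ModuleCat.of R R) 2, x = 0)
    (w3 : ∀ x : Ext U2 (ModuleCat.of R R) 3, x = 0)
    (hc : ∃ α : Ext U3 (ModuleCat.of R R) 3, ∀ β, ∃ r : R, β = r • α) :
    ∃ ζ : T1 ⟶ ModuleCat.of R S, ∀ ψ : T1 ⟶ ModuleCat.of R S,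
      ∃ (r : R) (g : T2 ⟶ ModuleCat.of R S), ψ = r • ζ + tf ≫ g := by
  obtain ⟨α, hα⟩ := hc
  obtain ⟨β, rfl⟩ := Ext.contravariant_sequence_exact₃ hU _ α (w3 _) (rfl : 1 + 2 = 3)
  obtain ⟨γ, rfl⟩ := Ext.contravariant_sequence_exact₃ hT _ β (v2 _) (rfl : 1 + 1 = 2)
  obtain ⟨ζ, rfl⟩ := hq_surj h _ h1 γ
  refine ⟨ζ, fun ψ ↦ ?_⟩
  obtain ⟨r, hr⟩ := hα (hU.extClass.comp (hT.extClass.comp ((Ext.mk₀ ψ).comp (hqClass h)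
    (zero_add 1)) (rfl : 1 + 1 = 2)) (rfl : 1 + 2 = 3))
  have key : hT.extClass.comp ((Ext.mk₀ (ψ - r • ζ)).comp (hqClass h)
    (zero_add 1)) (rfl : 1 + 1 = 2) = 0 := by
    have h0 : hU.extClass.comp (hT.extClass.comp ((Ext.mk₀ (ψ - r • ζ)).comp (hqClass h)
        (zero_add 1)) (rfl : 1 + 1 = 2)) (rfl : 1 + 2 = 3) = 0 := by
      have e : ψ - r • ζ = ψ + (-r) • ζ := by rw [neg_smul, sub_eq_add_neg]
      rw [e, Ext.mk₀_add, Ext.mk₀_smul]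
      simp only [Ext.add_comp, Ext.comp_add, Ext.smul_comp, Ext.comp_smul]
      rw [hr, ← add_smul, add_neg_cancel, zero_smul]
    obtain ⟨y, hy⟩ := Ext.contravariant_sequence_exact₁ hU _ _ _ h0
    rw [← hy, w2 y, Ext.comp_zero]
  obtain ⟨g, hg⟩ := hq_lift h hT h1 h2 _ key
  exact ⟨r, g, by rw [hg]; abel⟩

end AbsExt


section AbsMod
open Abelian (Ext)
variable {R S : Type} [CommRing R] [CommRing S] [Algebra R S]

lemma hq_kill {ℓ : R} (h : HypQuot R S ℓ) {Z : Type} [AddCommGroup Z] [Module R Z] [Module S Z]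
    [IsScalarTower R S Z] (z : Z) : ℓ • z = 0 := by
  rw [← algebraMap_smul S ℓ z, (h.ker ℓ).2 ⟨1, mul_one _⟩, zero_smul]

lemma ext_pd_one {T : ShortComplex (ModuleCat.{0} R)} (hT : T.ShortExact) (Y : ModuleCat.{0} R)
    [Projective T.X₁] [Projective T.X₂] (i : ℕ) (x : Ext T.X₃ Y (i+2)) : x = 0 := by
  obtain ⟨y, rfl⟩ := Ext.contravariant_sequence_exact₃ hT Y x (Ext.eq_zero_of_projective _)
    (by omega : 1 + (i+1) = i+2)
  rw [Ext.eq_zero_of_projective y, Ext.comp_zero]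

lemma hq_ext_S {ℓ : R} (h : HypQuot R S ℓ) (Y : ModuleCat.{0} R) (i : ℕ)
    (x : Ext (ModuleCat.of R S) Y (i+2)) : x = 0 := by
  have : Projective (ModuleCat.of R R) := (IsProjective.iff_projective R).1 inferInstance
  exact @ext_pd_one R _ _ (hq_ses h) Y this this i x

lemma hq_ext_F {ℓ : R} (h : HypQuot R S ℓ) (m : ℕ) (Y : ModuleCat.{0} R) (i : ℕ)
    (x : Ext (ModuleCat.of R (Fin m → S)) Y (i+2)) : x = 0 := by
  have := h.dom
  have : Projective (ModuleCat.of R (Fin m → R)) :=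
    (IsProjective.iff_projective (R := R) (Fin m → R)).1 inferInstance
  refine @ext_pd_one R _ _ (syz_ses (LinearMap.lsmul R (Fin m → R) ℓ)
    ((Algebra.linearMap R S).compLeft (Fin m)) ?_ ?_ ?_) Y this this i x
  · intro a b hab
    funext j
    exact mul_left_cancel₀ h.ne (congrFun hab j)
  · intro r
    constructor
    · intro hr
      choose t ht using fun j ↦ (h.ker (r j)).1 (congrFun hr j)
      exact ⟨t, funext ht⟩
    · rintro ⟨t, rfl⟩
      funext j
      exact (h.ker _).2 ⟨t j, rfl⟩
  · intro s
    choose t ht using fun j ↦ h.surj (s j)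
    exact ⟨t, funext ht⟩

lemma hq_lift' {ℓ : R} (h : HypQuot R S ℓ) {A B C : Type} [AddCommGroup A] [AddCommGroup B]
    [AddCommGroup C] [Module R A] [Module R B] [Module R C] [Module S A] [Module S B]
    [IsScalarTower R S A] [IsScalarTower R S B]
    (i : A →ₗ[S] B) (p : B →ₗ[R] C) (hi : Function.Injective i) (hip : Function.Exact i p)
    (hp : Function.Surjective p)
    (hC : ∀ x : Ext (ModuleCat.of R C) (ModuleCat.of R R) 2, x = 0) (ψ : A →ₗ[S] S) :
    ∃ g : B →ₗ[S] S, g ∘ₗ i = ψ := by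
  obtain ⟨g, hg⟩ := hq_lift h (syz_ses (i.restrictScalars R) p hi hip hp)
    (fun x ↦ hq_kill (S := S) h (Z := A) x) (fun x ↦ hq_kill (S := S) h (Z := B) x)
    (ModuleCat.ofHom (ψ.restrictScalars R)) (hC _)
  refine ⟨LinearMap.extendScalarsOfSurjective h.surj g.hom, ?_⟩
  ext a
  exact LinearMap.congr_fun (congrArg ModuleCat.Hom.hom hg) a

/-- If all functionals extend along the kernel of a surjection from a free module
and the kernel is finite projective, then the target is projective. -/
lemma proj_of_extend {m : ℕ} {Z : Type} [AddCommGroup Z] [Module S Z] (f : (Fin m → S) →ₗ[S] Z)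
    (hf : Function.Surjective f) [Module.Finite S (LinearMap.ker f)]
    [Module.Projective S (LinearMap.ker f)]
    (H : ∀ ψ : LinearMap.ker f →ₗ[S] S, ∃ g : (Fin m → S) →ₗ[S] S,
      g ∘ₗ (LinearMap.ker f).subtype = ψ) : Module.Projective S Z := by
  obtain ⟨k, π, hπ⟩ := Module.Finite.exists_fin' S (LinearMap.ker f)
  obtain ⟨s, hs⟩ := Module.projective_lifting_property π LinearMap.id hπ
  choose g hg using fun j ↦ H (LinearMap.proj j ∘ₗ s)
  let ρ : (Fin m → S) →ₗ[S] LinearMap.ker f := π ∘ₗ LinearMap.pi g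
  have hρ : ∀ z : LinearMap.ker f, ρ z = z := by
    intro z
    have h1 : LinearMap.pi g (z : Fin m → S) = s z := by
      funext j
      exact LinearMap.congr_fun (hg j) z
    change π (LinearMap.pi g (z : Fin m → S)) = z
    rw [h1]
    exact LinearMap.congr_fun hs z
  let u : (Fin m → S) →ₗ[S] (Fin m → S) := LinearMap.id - (LinearMap.ker f).subtype ∘ₗ ρ
  have hu : LinearMap.ker f ≤ LinearMap.ker u := by
    intro z hz
    have := hρ ⟨z, hz⟩
    simp [u] at this ⊢
    rw [this]; simp
  let t := (LinearMap.ker f).liftQ u hu ∘ₗ (f.quotKerEquivOfSurjective hf).symm.toLinearMap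
  refine Module.Projective.of_split t f ?_
  ext z
  obtain ⟨x, rfl⟩ := hf z
  have h1 : (f.quotKerEquivOfSurjective hf).symm (f x) = (LinearMap.ker f).mkQ x := by
    rw [LinearEquiv.symm_apply_eq]; rfl
  have h2 : t (f x) = u x := by
    change (LinearMap.ker f).liftQ u hu ((f.quotKerEquivOfSurjective hf).symm (f x)) = u x
    rw [h1]; simp
  change f (t (f x)) = f x
  rw [h2]
  have h3 : f (ρ x : Fin m → S) = 0 := (ρ x).2
  simp [u, h3]

theorem hq_proj {ℓ : R} (h : HypQuot R S ℓ) [IsNoetherianRing S] (p : ℕ) :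
    ∀ (Z : Type) [AddCommGroup Z] [Module R Z] [Module S Z] [IsScalarTower R S Z]
      [Module.Finite S Z], HasProjectiveDimensionLE (ModuleCat.of S Z) p →
      (∀ i (x : Ext (ModuleCat.of R Z) (ModuleCat.of R R) (i+2)), x = 0) →
      Module.Projective S Z := by
  induction p with
  | zero =>
    intro Z _ _ _ _ _ hp _
    exact syz_projective_mk.1 hp
  | succ p ih =>
    intro Z _ _ _ _ _ hp hv
    obtain ⟨m, f, hf⟩ := Module.Finite.exists_fin' S Z
    have hi : Function.Injective (LinearMap.ker f).subtype := Subtype.val_injective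
    have hex : Function.Exact (LinearMap.ker f).subtype f := by
      rw [LinearMap.exact_iff]; simp
    have hS := syz_ses (M := LinearMap.ker f) (LinearMap.ker f).subtype f hi hex hf
    have hR := syz_ses (M := LinearMap.ker f) ((LinearMap.ker f).subtype.restrictScalars R)
      (f.restrictScalars R) hi hex hf
    have hpF : Projective (ModuleCat.of S (Fin m → S)) :=
      (IsProjective.iff_projective (R := S) (Fin m → S)).1 inferInstance
    have hpd : HasProjectiveDimensionLE (ModuleCat.of S (LinearMap.ker f)) p :=
      (hS.hasProjectiveDimensionLT_X₃_iff p hpF).1 hp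
    have : Module.Projective S (LinearMap.ker f) := by
      refine ih (LinearMap.ker f) hpd fun i x ↦ ?_
      exact ext_shift hR _ (i+2) (hq_ext_F h m _ i) (hv (i+1)) x
    exact proj_of_extend f hf
      (hq_lift' h (LinearMap.ker f).subtype (f.restrictScalars R) hi hex hf (hv 0))

theorem hq_main {ℓ : R} (h : HypQuot R S ℓ) [IsNoetherianRing S] (p : ℕ)
    (hS : ∀ (M : Type) [AddCommGroup M] [Module S M],
      HasProjectiveDimensionLE (ModuleCat.of S M) p)
    (J : Ideal S) {Q : Type} [AddCommGroup Q] [Module R Q] (q : S →ₗ[R] Q)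
    (hq : Function.Surjective q) (hqk : ∀ s, q s = 0 ↔ s ∈ J)
    (hv : ∀ i (x : Ext (ModuleCat.of R Q) (ModuleCat.of R R) (i+4)), x = 0)
    (hc : ∃ α : Ext (ModuleCat.of R Q) (ModuleCat.of R R) 3, ∀ β, ∃ r : R, β = r • α)
    (m : ℕ) (f : (Fin m → S) →ₗ[S] S) (hf : LinearMap.range f = J) :
    Module.Projective S (LinearMap.ker f) ∧
    ∃ ζ : LinearMap.ker f →ₗ[S] S, ∀ ψ : LinearMap.ker f →ₗ[S] S,
      ∃ (r : S) (g : (Fin m → S) →ₗ[S] S), ψ = r • ζ + g ∘ₗ (LinearMap.ker f).subtype := by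
  have hi : Function.Injective (LinearMap.ker f).subtype := Subtype.val_injective
  let f' : (Fin m → S) →ₗ[S] J := f.codRestrict J (fun x ↦ hf ▸ LinearMap.mem_range_self f x)
  have hf' : Function.Surjective f' := by
    rintro ⟨y, hy⟩
    rw [← hf] at hy
    obtain ⟨x, hx⟩ := hy
    exact ⟨x, Subtype.ext hx⟩
  have hex : Function.Exact (LinearMap.ker f).subtype f' := by
    intro x
    constructor
    · intro hx
      exact ⟨⟨x, congrArg Subtype.val hx⟩, rfl⟩
    · rintro ⟨y, rfl⟩
      exact Subtype.ext y.2
  have hT := syz_ses (M := LinearMap.ker f) ((LinearMap.ker f).subtype.restrictScalars R)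
      (f'.restrictScalars R) hi hex hf'
  have hU := syz_ses (M := J) ((Submodule.subtype J).restrictScalars R) q Subtype.val_injective
    (by
      intro s
      rw [hqk]
      constructor
      · intro hs; exact ⟨⟨s, hs⟩, rfl⟩
      · rintro ⟨y, rfl⟩; exact y.2) hq
  have hJ : ∀ i (x : Ext (ModuleCat.of R J) (ModuleCat.of R R) (i+3)), x = 0 := fun i x ↦
    ext_shift hU _ (i+3) (hq_ext_S h _ (i+1)) (hv i) x
  have hZ : ∀ i (x : Ext (ModuleCat.of R (LinearMap.ker f)) (ModuleCat.of R R) (i+2)), x = 0 :=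
    fun i x ↦ ext_shift hT _ (i+2) (hq_ext_F h m _ i) (hJ i) x
  refine ⟨hq_proj h p _ (hS _) hZ, ?_⟩
  obtain ⟨ζ, hζ⟩ := hq_cyclic h _ _ _ _ _ _ hT hU
    (fun x ↦ hq_kill (S := S) h (Z := LinearMap.ker f) x)
    (fun x ↦ hq_kill (S := S) h (Z := Fin m → S) x)
    (hq_ext_F h m _ 0) (hq_ext_S h _ 0) (hq_ext_S h _ 1) hc
  refine ⟨LinearMap.extendScalarsOfSurjective h.surj ζ.hom, fun ψ ↦ ?_⟩
  obtain ⟨r, g, hg⟩ := hζ (ModuleCat.ofHom (ψ.restrictScalars R))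
  refine ⟨algebraMap R S r, LinearMap.extendScalarsOfSurjective h.surj g.hom, ?_⟩
  ext z
  have := LinearMap.congr_fun (congrArg ModuleCat.Hom.hom hg) z
  refine this.trans ?_
  simp [Algebra.smul_def]

end AbsMod


section AbsAlg
variable {S : Type} [CommRing S] [IsDomain S] [IsNoetherianRing S]

theorem gens_le_two (m : ℕ) (f : Fin m → S) (F : (Fin m → S) →ₗ[S] S)
    (hF : ∀ x, F x = ∑ i, x i * f i) (hf : ∀ i, f i ≠ 0)
    (𝔪 : Ideal S) (h𝔪 : 𝔪 ≠ ⊤) (hZ : ∀ z : Fin m → S, F z = 0 → ∀ i, z i ∈ 𝔪)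
    [Module.Projective S (LinearMap.ker F)]
    (hζ : ∃ ζ : LinearMap.ker F →ₗ[S] S, ∀ ψ : LinearMap.ker F →ₗ[S] S,
      ∃ (r : S) (g : (Fin m → S) →ₗ[S] S), ψ = r • ζ + g ∘ₗ (LinearMap.ker F).subtype) :
    m ≤ 2 := by
  obtain ⟨ζ, hζ⟩ := hζ
  by_contra hm
  push Not at hm
  let D := LinearMap.ker F →ₗ[S] S
  have hmem : ∀ g : (Fin m → S) →ₗ[S] S,
      (g ∘ₗ (LinearMap.ker F).subtype : D) ∈ 𝔪 • (⊤ : Submodule S D) := by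
    intro g
    obtain ⟨k, π, hπ⟩ := Module.Finite.exists_fin' S (LinearMap.ker F)
    obtain ⟨s, hs⟩ := Module.projective_lifting_property π LinearMap.id hπ
    have h1 : (g ∘ₗ (LinearMap.ker F).subtype : D) =
        ∑ j, g (π (Pi.single j 1) : Fin m → S) • (LinearMap.proj j ∘ₗ s : D) := by
      ext z
      have h2 : z = π (s z) := (LinearMap.congr_fun hs z).symm
      have h3 : s z = ∑ j, s z j • (Pi.single j 1 : Fin k → S) := by
        funext i
        simp [Finset.sum_apply, Pi.single_apply]
      have h4 : (z : Fin m → S) = ∑ j, s z j • (π (Pi.single j 1) : Fin m → S) := by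
        conv_lhs => rw [h2, h3, map_sum]
        simp
      change g z = _
      rw [h4, map_sum]
      simp [mul_comm]
    rw [h1]
    refine Submodule.sum_mem _ fun j _ ↦ Submodule.smul_mem_smul ?_ trivial
    have h5 : ∀ y : Fin m → S, g y = ∑ i, y i * g (Pi.single i 1) := by
      intro y
      have h6 : y = ∑ i, y i • (Pi.single i 1 : Fin m → S) := by
        funext i
        simp [Finset.sum_apply, Pi.single_apply]
      conv_lhs => rw [h6, map_sum]
      simp
    rw [h5]
    exact Ideal.sum_mem _ fun i _ ↦ Ideal.mul_mem_right _ _ (hZ _ (π (Pi.single j 1)).2 i)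
  have hfin : Module.Finite S D := inferInstance
  obtain ⟨s, hs1, hs2⟩ := Submodule.exists_sub_one_mem_and_smul_eq_zero_of_fg_of_le_smul 𝔪
    (⊤ : Submodule S (D ⧸ Submodule.span S {ζ})) Module.Finite.fg_top (by
      rintro x -
      obtain ⟨ψ, rfl⟩ := Submodule.mkQ_surjective _ x
      obtain ⟨r, g, rfl⟩ := hζ ψ
      have h1 : (Submodule.span S {ζ}).mkQ (r • ζ) = 0 := by
        simp only [Submodule.mkQ_apply, Submodule.Quotient.mk_eq_zero]
        exact Submodule.smul_mem _ _ (Submodule.mem_span_singleton_self ζ)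
      rw [map_add, h1, zero_add]
      have h2 := Submodule.mem_map_of_mem (f := (Submodule.span S {ζ}).mkQ) (hmem g)
      rw [Submodule.map_smul''] at h2
      exact Submodule.smul_mono le_rfl le_top h2)
  have hs : ∀ ψ : D, ∃ a : S, a • ζ = s • ψ := by
    intro ψ
    have h1 := hs2 ((Submodule.span S {ζ}).mkQ ψ) trivial
    rw [← map_smul] at h1
    simp only [Submodule.mkQ_apply, Submodule.Quotient.mk_eq_zero] at h1
    exact Submodule.mem_span_singleton.1 h1
  have hs0 : s ≠ 0 := by
    rintro rfl
    apply h𝔪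
    rw [Ideal.eq_top_iff_one]
    simpa using 𝔪.neg_mem hs1
  let e : Fin m → D := fun i ↦ LinearMap.proj i ∘ₗ (LinearMap.ker F).subtype
  let i0 : Fin m := ⟨0, by omega⟩
  let i1 : Fin m := ⟨1, by omega⟩
  let i2 : Fin m := ⟨2, by omega⟩
  have h01 : i0 ≠ i1 := by simp [i0, i1]
  have h02 : i0 ≠ i2 := by simp [i0, i2]
  have h12 : i1 ≠ i2 := by simp [i1, i2]
  have hK : ∀ i j : Fin m, F (Pi.single j (f i) - Pi.single i (f j)) = 0 := by
    intro i j
    rw [hF]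
    simp [sub_mul, Finset.sum_sub_distrib, Pi.single_apply]
    ring
  let K : Fin m → LinearMap.ker F := fun i ↦ ⟨Pi.single i2 (f i) - Pi.single i (f i2), hK i i2⟩
  obtain ⟨a, ha⟩ := hs (e i0)
  obtain ⟨b, hb⟩ := hs (e i1)
  have hrel : ∀ z : LinearMap.ker F, b * (s * (z : Fin m → S) i0) = a * (s * (z : Fin m → S) i1) := by
    intro z
    have h1 : a * ζ z = s * (z : Fin m → S) i0 := LinearMap.congr_fun ha z
    have h2 : b * ζ z = s * (z : Fin m → S) i1 := LinearMap.congr_fun hb z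
    rw [← h1, ← h2]; ring
  have hb0 := hrel (K i0)
  simp [K, h02, h01.symm, h12, hs0, hf] at hb0
  have h1 : a * ζ (K i0) = s * (K i0 : Fin m → S) i0 := LinearMap.congr_fun ha _
  have ha0 := hrel (K i1)
  simp [K, h02, h01, h12, hs0, hf] at ha0
  rw [ha0] at h1
  simp [K, h02, h01, h12, hs0, hf] at h1

end AbsAlg


section MinGens
variable {k : Type} [Field k] {n : ℕ}

lemma hc_mul (z f : MvPolynomial (Fin n) k) (d e : ℕ) (hf : f.IsHomogeneous d) :
    homogeneousComponent e (z * f) =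
      if d ≤ e then homogeneousComponent (e - d) z * f else 0 := by
  letI : GradedRing (homogeneousSubmodule (Fin n) k) := gradedAlgebra
  have h := DirectSum.coe_decompose_mul_of_right_mem (homogeneousSubmodule (Fin n) k)
    (a := z) e ((mem_homogeneousSubmodule d f).2 hf)
  have h1 : ∀ (i : ℕ) (p : MvPolynomial (Fin n) k),
      (DirectSum.decompose (homogeneousSubmodule (Fin n) k) p i : MvPolynomial (Fin n) k) =
        homogeneousComponent i p := fun i p ↦ decomposition.decompose'_apply p i
  rw [h1] at h
  rw [h, h1]

lemma hom_zero_unit (f : MvPolynomial (Fin n) k) (hf : f.IsHomogeneous 0) (h0 : f ≠ 0) :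
    IsUnit f := by
  rw [← totalDegree_zero_iff_isHomogeneous, totalDegree_eq_zero_iff_eq_C] at hf
  rw [hf] at h0 ⊢
  refine IsUnit.map C (isUnit_iff_ne_zero.2 ?_)
  intro h
  rw [h] at h0
  simp at h0

theorem exists_min_gens (J : Ideal (MvPolynomial (Fin n) k)) (hJ : J ≠ ⊤)
    (T : Set (MvPolynomial (Fin n) k)) (hT : ∀ f ∈ T, ∃ d, f.IsHomogeneous d)
    (hJT : J = Ideal.span T) :
    ∃ (m : ℕ) (f : Fin m → MvPolynomial (Fin n) k),
      (∀ i, f i ≠ 0 ∧ ∃ d, 0 < d ∧ (f i).IsHomogeneous d) ∧ J = Ideal.span (Set.range f) ∧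
      ∀ z : Fin m → MvPolynomial (Fin n) k, ∑ i, z i * f i = 0 → ∀ i, constantCoeff (z i) = 0 := by
  classical
  let P : ℕ → Prop := fun m ↦ ∃ f : Fin m → MvPolynomial (Fin n) k,
    (∀ i, ∃ d, (f i).IsHomogeneous d) ∧ J = Ideal.span (Set.range f)
  have hP : ∃ m, P m := by
    obtain ⟨s, hs, hs'⟩ := (Submodule.fg_span_iff_fg_span_finset_subset T).1
      (IsNoetherian.noetherian (Ideal.span T))
    refine ⟨s.card, fun i ↦ (s.equivFin.symm i : MvPolynomial (Fin n) k), fun i ↦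
      hT _ (hs (s.equivFin.symm i).2), ?_⟩
    rw [hJT]
    refine Eq.trans hs' (congrArg Ideal.span ?_)
    ext x
    constructor
    · intro hx
      exact ⟨s.equivFin ⟨x, hx⟩, by simp⟩
    · rintro ⟨i, rfl⟩
      exact (s.equivFin.symm i).2
  obtain ⟨f, hf, hfJ⟩ := Nat.find_spec hP
  have hmin : ∀ m', m' < Nat.find hP → ¬ P m' := fun m' h ↦ Nat.find_min hP h
  generalize Nat.find hP = m at f hf hfJ hmin
  have key : ∀ i, ∀ w : Fin m → MvPolynomial (Fin n) k, f i = ∑ j ∈ Finset.univ.erase i, w j * f j →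
      False := by
    intro i w hw
    obtain _ | m := m
    · exact i.elim0
    · refine hmin m (Nat.lt_succ_self m) ⟨fun j ↦ f (i.succAbove j), fun j ↦ hf _, ?_⟩
      have h1 : ∀ j, j ≠ i → f j ∈ Ideal.span (Set.range fun j ↦ f (i.succAbove j)) := by
        intro j hj
        obtain ⟨j', rfl⟩ := Fin.exists_succAbove_eq hj
        exact Ideal.subset_span ⟨j', rfl⟩
      rw [hfJ]
      apply le_antisymm
      · rw [Ideal.span_le]
        rintro _ ⟨j, rfl⟩
        by_cases hj : j = i
        · rw [hj, hw]
          exact Ideal.sum_mem _ fun j' hj' ↦ Ideal.mul_mem_left _ _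
            (h1 j' (Finset.ne_of_mem_erase hj'))
        · exact h1 j hj
      · apply Ideal.span_mono
        rintro _ ⟨j, rfl⟩
        exact ⟨_, rfl⟩
  have hne : ∀ i, f i ≠ 0 := by
    intro i hi
    exact key i 0 (by simp [hi])
  refine ⟨m, f, fun i ↦ ⟨hne i, ?_⟩, hfJ, ?_⟩
  · obtain ⟨d, hd⟩ := hf i
    refine ⟨d, ?_, hd⟩
    rw [Nat.pos_iff_ne_zero]
    rintro rfl
    apply hJ
    refine Ideal.eq_top_of_isUnit_mem J ?_ (hom_zero_unit _ hd (hne i))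
    rw [hfJ]
    exact Ideal.subset_span ⟨i, rfl⟩
  · intro z hz i
    choose d hd using hf
    by_contra hc
    have h1 := congrArg (homogeneousComponent (d i)) hz
    rw [map_sum, map_zero, ← Finset.add_sum_erase _ _ (Finset.mem_univ i), hc_mul _ _ _ _ (hd i),
      if_pos le_rfl, Nat.sub_self, homogeneousComponent_zero] at h1
    refine key i (fun j ↦ if d j ≤ d i then
      C (- (constantCoeff (z i))⁻¹) * homogeneousComponent (d i - d j) (z j) else 0) ?_
    have h2 : C (constantCoeff (z i)) * f i =
        - ∑ j ∈ Finset.univ.erase i, homogeneousComponent (d i) (z j * f j) :=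
      eq_neg_of_add_eq_zero_left h1
    have h3 : f i = C ((constantCoeff (z i))⁻¹) * (C (constantCoeff (z i)) * f i) := by
      rw [← mul_assoc, ← C_mul, inv_mul_cancel₀ hc, C_1, one_mul]
    rw [h3, h2, mul_neg, Finset.mul_sum, ← Finset.sum_neg_distrib]
    refine Finset.sum_congr rfl fun j _ ↦ ?_
    rw [hc_mul _ _ _ _ (hd j)]
    split_ifs
    · rw [C_neg]; ring
    · simp

end MinGens


section Coord
variable {k : Type} [Field k] {n : ℕ}

lemma lin_eq_sum (ℓ : MvPolynomial (Fin (n+1)) k) (h : ℓ.IsHomogeneous 1) :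
    ℓ = ∑ j, C (coeff (Finsupp.single j 1) ℓ) * X j := by
  ext d
  by_cases hd : d.degree = 1
  · have : ∃ j, d = Finsupp.single j 1 := by
      have h0 : d ≠ 0 := by rintro rfl; simp at hd
      obtain ⟨j, hj⟩ := Finsupp.ne_iff.1 h0
      refine ⟨j, ?_⟩
      have h1 : Finsupp.single j 1 ≤ d := by
        rw [Finsupp.single_le_iff]
        have : d j ≠ 0 := hj
        omega
      obtain ⟨e, rfl⟩ := exists_add_of_le h1
      rw [map_add, Finsupp.degree_single] at hd
      have : e.degree = 0 := by omega
      rw [Finsupp.degree_eq_zero_iff] at this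
      rw [this, add_zero]
    obtain ⟨j, rfl⟩ := this
    simp [coeff_sum, coeff_C_mul, coeff_X, Finsupp.single_left_inj]
  · rw [h.coeff_eq_zero hd]
    have h2 : (∑ j, C (coeff (Finsupp.single j 1) ℓ) * X j :
        MvPolynomial (Fin (n+1)) k).IsHomogeneous 1 := by
      apply IsHomogeneous.sum
      intro j _
      simpa using (isHomogeneous_C (Fin (n+1)) (coeff (Finsupp.single j 1) ℓ)).mul
        (isHomogeneous_X k j)
    rw [h2.coeff_eq_zero hd]

/-- Elimination of a variable using a linear form. -/
theorem exists_coord (ℓ : MvPolynomial (Fin (n+1)) k) (h : ℓ.IsHomogeneous 1) (h0 : ℓ ≠ 0) :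
    ∃ (φ : MvPolynomial (Fin (n+1)) k →ₐ[k] MvPolynomial (Fin n) k)
      (σ : MvPolynomial (Fin n) k →ₐ[k] MvPolynomial (Fin (n+1)) k),
      (∀ s, φ (σ s) = s) ∧ φ ℓ = 0 ∧ (∀ r, ∃ t, σ (φ r) = r + ℓ * t) ∧
      (∀ p d, p.IsHomogeneous d → (φ p).IsHomogeneous d) ∧
      (∀ p d, p.IsHomogeneous d → (σ p).IsHomogeneous d) := by
  have hs := lin_eq_sum ℓ h
  set a : Fin (n+1) → k := fun j ↦ coeff (Finsupp.single j 1) ℓ with ha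
  change ℓ = ∑ j, C (a j) * X j at hs
  have : ∃ i, a i ≠ 0 := by
    by_contra hc
    push Not at hc
    apply h0
    rw [hs]
    simp [hc]
  obtain ⟨i, hi⟩ := this
  rw [Fin.sum_univ_succAbove _ i] at hs
  let y : MvPolynomial (Fin n) k := - ∑ j, C (a (i.succAbove j) / a i) * X j
  let v : Fin (n+1) → MvPolynomial (Fin n) k := i.insertNth y X
  have hvi : v i = y := Fin.insertNth_apply_same _ _ _
  have hvj : ∀ j, v (i.succAbove j) = X j := fun j ↦ Fin.insertNth_apply_succAbove _ _ _ _
  have hy : y.IsHomogeneous 1 := by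
    apply IsHomogeneous.neg
    apply IsHomogeneous.sum
    intro j _
    simpa using (isHomogeneous_C (Fin n) (a (i.succAbove j) / a i)).mul (isHomogeneous_X k j)
  have hv : ∀ j, (v j).IsHomogeneous 1 := by
    intro j
    rcases Fin.eq_self_or_eq_succAbove i j with rfl | ⟨j, rfl⟩
    · rw [hvi]; exact hy
    · rw [hvj]; exact isHomogeneous_X k j
  refine ⟨aeval v, rename i.succAbove, ?_, ?_, ?_, ?_, ?_⟩
  · intro s
    rw [aeval_rename]
    have : v ∘ i.succAbove = X := funext hvj
    rw [this, aeval_X_left_apply]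
  · rw [hs]
    simp only [map_add, map_mul, map_sum, aeval_X, hvi, hvj, algHom_C, algebraMap_eq]
    simp only [y, mul_neg, Finset.mul_sum]
    rw [neg_add_eq_zero]
    refine Finset.sum_congr rfl fun j _ ↦ ?_
    rw [← mul_assoc, ← C_mul, mul_div_cancel₀ _ hi]
  · intro r
    have key : (Ideal.Quotient.mkₐ k (Ideal.span {ℓ})).comp
        ((rename i.succAbove).comp (aeval v)) = Ideal.Quotient.mkₐ k (Ideal.span {ℓ}) := by
      apply MvPolynomial.algHom_ext
      intro j
      rcases Fin.eq_self_or_eq_succAbove i j with rfl | ⟨j, rfl⟩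
      · simp only [AlgHom.comp_apply, aeval_X, hvi, Ideal.Quotient.mkₐ_eq_mk]
        rw [Ideal.Quotient.eq, Ideal.mem_span_singleton]
        refine ⟨- C (a j)⁻¹, ?_⟩
        rw [hs]
        simp only [y, map_neg, map_sum, map_mul, rename_C, rename_X]
        have e1 : C (a j) * X j * - C (a j)⁻¹ = - (X j : MvPolynomial (Fin (n+1)) k) := by
          have : (C (a j) * C (a j)⁻¹ : MvPolynomial (Fin (n+1)) k) = 1 := by
            rw [← C_mul, mul_inv_cancel₀ hi, C_1]
          linear_combination (- X j) * this
        rw [add_mul, e1, Finset.sum_mul, sub_eq_neg_add, ← Finset.sum_neg_distrib]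
        congr 1
        refine Finset.sum_congr rfl fun j' _ ↦ ?_
        rw [div_eq_mul_inv, C_mul]
        ring
      · simp only [AlgHom.comp_apply, aeval_X, hvj, rename_X]
    have h1 := DFunLike.congr_fun key r
    simp only [AlgHom.comp_apply, Ideal.Quotient.mkₐ_eq_mk] at h1
    rw [Ideal.Quotient.eq, Ideal.mem_span_singleton] at h1
    obtain ⟨t, ht⟩ := h1
    exact ⟨t, by rw [← ht]; ring⟩
  · intro p d hp
    simpa using hp.aeval v hv
  · intro p d hp
    exact hp.rename_isHomogeneous

lemma wreg_elem {R : Type} [CommRing R] (N : Ideal R) (r : R) (h : ∀ x, r * x ∈ N → x ∈ N) :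
    IsSMulRegular (R ⧸ (N • ⊤ : Submodule R R)) r := by
  rw [isSMulRegular_quotient_iff_mem_of_smul_mem]
  intro x hx
  simp only [smul_eq_mul, Ideal.mul_top] at hx ⊢
  exact h x hx

lemma height_two (p : PrimeSpectrum (MvPolynomial (Fin (n+1)) k)) (a b : MvPolynomial (Fin (n+1)) k)
    (hp : p.asIdeal ∈ (Ideal.span {a, b}).minimalPrimes) : Order.height p ≤ 2 := by
  have h1 := Ideal.height_le_card_of_mem_minimalPrimes_span (Set.toFinite {a, b}) hp
  rw [PrimeSpectrum.height_eq_orderHeight] at h1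
  refine h1.trans ?_
  have h2 := Set.ncard_insert_le a {b}
  rw [Set.ncard_singleton] at h2
  exact_mod_cast h2

end Coord



section Final
open Abelian (Ext)
variable {k : Type} [Field k] {n : ℕ}

theorem gor_gens_le_two (I : Ideal (MvPolynomial (Fin (n+1)) k))
    (hv : ∀ i : ℕ, i ≠ 3 → extVanishes I i) (hc : extCyclic I 3)
    (ℓ : MvPolynomial (Fin (n+1)) k) (h0 : ℓ ≠ 0) (hℓI : ℓ ∈ I)
    (φ : MvPolynomial (Fin (n+1)) k →ₐ[k] MvPolynomial (Fin n) k)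
    (σ : MvPolynomial (Fin n) k →ₐ[k] MvPolynomial (Fin (n+1)) k)
    (hφσ : ∀ s, φ (σ s) = s) (hφℓ : φ ℓ = 0) (hσφ : ∀ r, ∃ t, σ (φ r) = r + ℓ * t)
    (J : Ideal (MvPolynomial (Fin n) k)) (hJ : ∀ s, s ∈ J ↔ σ s ∈ I)
    (m : ℕ) (f : Fin m → MvPolynomial (Fin n) k) (hf0 : ∀ i, f i ≠ 0)
    (hfJ : J = Ideal.span (Set.range f))
    (hrel : ∀ z : Fin m → MvPolynomial (Fin n) k, ∑ i, z i * f i = 0 →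
      ∀ i, constantCoeff (z i) = 0) : m ≤ 2 := by
  let alg : Algebra (MvPolynomial (Fin (n+1)) k) (MvPolynomial (Fin n) k) :=
    φ.toRingHom.toAlgebra
  have hmap : ∀ r, algebraMap (MvPolynomial (Fin (n+1)) k) (MvPolynomial (Fin n) k) r = φ r :=
    fun r ↦ rfl
  have h : HypQuot (MvPolynomial (Fin (n+1)) k) (MvPolynomial (Fin n) k) ℓ :=
    { dom := inferInstance
      surj := fun s ↦ ⟨σ s, hφσ s⟩
      ker := by
        intro r
        rw [hmap]
        constructor
        · intro hr
          obtain ⟨t, ht⟩ := hσφ r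
          rw [hr, map_zero] at ht
          exact ⟨-t, by linear_combination ht⟩
        · rintro ⟨t, rfl⟩
          rw [map_mul, hφℓ, zero_mul]
      ne := h0 }
  have hcong : ∀ r, σ (φ r) - r ∈ I := by
    intro r
    obtain ⟨t, ht⟩ := hσφ r
    rw [ht, add_sub_cancel_left]
    exact Ideal.mul_mem_right _ _ hℓI
  let q : MvPolynomial (Fin n) k →ₗ[MvPolynomial (Fin (n+1)) k]
      (MvPolynomial (Fin (n+1)) k ⧸ I) :=
    { toFun := fun s ↦ Ideal.Quotient.mk I (σ s)
      map_add' := fun a b ↦ by rw [map_add, map_add]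
      map_smul' := fun r s ↦ by
        rw [Algebra.smul_def, hmap, map_mul, RingHom.id_apply]
        refine Ideal.Quotient.eq.2 ?_
        change σ (φ r) * σ s - r * σ s ∈ I
        rw [← sub_mul]
        exact Ideal.mul_mem_right _ _ (hcong r) }
  have hq : Function.Surjective q := by
    intro x
    obtain ⟨r, rfl⟩ := Ideal.Quotient.mk_surjective x
    exact ⟨φ r, Ideal.Quotient.eq.2 (hcong r)⟩
  have hqk : ∀ s, q s = 0 ↔ s ∈ J := by
    intro s
    rw [hJ]
    exact Ideal.Quotient.eq_zero_iff_mem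
  let F := Fintype.linearCombination (MvPolynomial (Fin n) k) f
  have hF : ∀ x, F x = ∑ i, x i * f i := fun x ↦ by
    simp [F, Fintype.linearCombination_apply]
  have hFr : LinearMap.range F = J := by
    rw [hfJ]
    exact Fintype.range_linearCombination _ _
  obtain ⟨hp, hζ⟩ := hq_main h n (fun M _ _ ↦ syz_mvPoly k n M) J q hq hqk
    (fun i x ↦ newExt_vanish _ _ (i+3) (hv (i+4) (by omega)) x)
    (newExt_cyclic _ _ 2 hc) m F hFr
  refine gens_le_two m f F hF hf0 (RingHom.ker constantCoeff) (RingHom.ker_ne_top _) ?_ hζ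
  intro z hz i
  rw [hF] at hz
  exact hrel z hz i

lemma gor_ci_aux (I : Ideal (MvPolynomial (Fin (n+1)) k)) (hI : I ≠ ⊤)
    (hht : idealHeight I = 3)
    (ℓ : MvPolynomial (Fin (n+1)) k) (h0 : ℓ ≠ 0) (hℓI : ℓ ∈ I) (hℓ : ℓ.IsHomogeneous 1)
    (φ : MvPolynomial (Fin (n+1)) k →ₐ[k] MvPolynomial (Fin n) k)
    (σ : MvPolynomial (Fin n) k →ₐ[k] MvPolynomial (Fin (n+1)) k)
    (hφσ : ∀ s, φ (σ s) = s) (hφℓ : φ ℓ = 0) (hσφ : ∀ r, ∃ t, σ (φ r) = r + ℓ * t)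
    (hσh : ∀ p d, p.IsHomogeneous d → (σ p).IsHomogeneous d)
    (J : Ideal (MvPolynomial (Fin n) k)) (hJ : ∀ s, s ∈ J ↔ σ s ∈ I)
    (m : ℕ) (f : Fin m → MvPolynomial (Fin n) k)
    (hf : ∀ i, f i ≠ 0 ∧ ∃ d, 0 < d ∧ (f i).IsHomogeneous d)
    (hfJ : J = Ideal.span (Set.range f)) (hm : m ≤ 2) : IsCI I := by
  have hcong : ∀ r, σ (φ r) - r ∈ I := by
    intro r
    obtain ⟨t, ht⟩ := hσφ r
    rw [ht, add_sub_cancel_left]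
    exact Ideal.mul_mem_right _ _ hℓI
  have hIJ : ∀ r, r ∈ I ↔ φ r ∈ J := by
    intro r
    rw [hJ]
    constructor
    · intro hr
      have := I.add_mem (hcong r) hr
      rwa [sub_add_cancel] at this
    · intro hr
      have := I.sub_mem hr (hcong r)
      rwa [sub_sub_cancel] at this
  let L : List (MvPolynomial (Fin (n+1)) k) := ℓ :: (List.ofFn f).map σ
  have hLI : I = Ideal.span {x | x ∈ L} := by
    apply le_antisymm
    · intro r hr
      have h1 : σ (φ r) ∈ Ideal.span {x | x ∈ L} := by
        have h2 : φ r ∈ Ideal.span (Set.range f) := hfJ ▸ (hIJ r).1 hr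
        have h3 := Ideal.mem_map_of_mem σ h2
        rw [Ideal.map_span] at h3
        refine Ideal.span_mono ?_ h3
        rintro _ ⟨_, ⟨i, rfl⟩, rfl⟩
        simp [L]
      obtain ⟨t, ht⟩ := hσφ r
      have h4 : ℓ * t ∈ Ideal.span {x | x ∈ L} :=
        Ideal.mul_mem_right _ _ (Ideal.subset_span (by simp [L]))
      have := Ideal.sub_mem _ h1 h4
      rwa [ht, add_sub_cancel_right] at this
    · rw [Ideal.span_le]
      intro x hx
      simp only [L, Set.mem_ofPred_eq, List.mem_cons, List.mem_map, List.mem_ofFn] at hx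
      rcases hx with rfl | ⟨_, ⟨i, rfl⟩, rfl⟩
      · exact hℓI
      · refine (hJ _).1 ?_
        rw [hfJ]
        exact Ideal.subset_span ⟨i, rfl⟩
  have hker : ∀ x, φ x = 0 → ∃ t, x = ℓ * t := by
    intro r hr
    obtain ⟨t, ht⟩ := hσφ r
    rw [hr, map_zero] at ht
    exact ⟨-t, by linear_combination - ht⟩
  -- The three steps of regularity.
  have hreg0 : ∀ x, ℓ * x ∈ (⊥ : Ideal (MvPolynomial (Fin (n+1)) k)) →
      x ∈ (⊥ : Ideal (MvPolynomial (Fin (n+1)) k)) := by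
    intro x hx
    rw [Ideal.mem_bot] at hx ⊢
    exact (mul_eq_zero.1 hx).resolve_left h0
  have hreg1 : ∀ g : MvPolynomial (Fin n) k, g ≠ 0 → ∀ x, σ g * x ∈ Ideal.span {ℓ} →
      x ∈ Ideal.span {ℓ} := by
    intro g hg x hx
    rw [Ideal.mem_span_singleton] at hx ⊢
    obtain ⟨t, ht⟩ := hx
    have h1 := congrArg φ ht
    rw [map_mul, map_mul, hφσ, hφℓ, zero_mul] at h1
    obtain ⟨t, ht⟩ := hker x ((mul_eq_zero.1 h1).resolve_left hg)
    exact ⟨t, ht⟩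
  refine ⟨L, ?_, ⟨⟨?_⟩, ?_⟩, hLI⟩
  · intro x hx
    simp only [L, List.mem_cons, List.mem_map, List.mem_ofFn] at hx
    rcases hx with rfl | ⟨_, ⟨i, rfl⟩, rfl⟩
    · exact ⟨1, one_pos, hℓ⟩
    · obtain ⟨-, d, hd, hh⟩ := hf i
      exact ⟨d, hd, hσh _ _ hh⟩
  · intro i hi
    apply wreg_elem
    have hlen : L.length = m + 1 := by simp [L]
    rw [hlen] at hi
    obtain _ | _ | _ | i := i
    · simpa [L] using hreg0
    · obtain _ | m := m
      · omega
      · simpa [L, List.ofFn_succ] using hreg1 (f 0) (hf 0).1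
    · obtain _ | _ | m := m
      · omega
      · omega
      · obtain rfl : m = 0 := by omega
        have hspan : Ideal.ofList (L.take 2) = Ideal.span {ℓ, σ (f 0)} := by
          simp [L, List.ofFn_succ, Ideal.ofList_cons, Ideal.span_insert]
        have hL2 : L[2] = σ (f 1) := by
          simp [L, List.ofFn_succ]
        have hcop : IsRelPrime (f 0) (f 1) := by
          intro d hd0 hd1
          by_contra hd
          have hle : I ≤ Ideal.span {ℓ, σ d} := by
            rw [hLI, Ideal.span_le]
            intro x hx
            simp only [L, Set.mem_ofPred_eq, List.mem_cons, List.mem_map, List.mem_ofFn] at hx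
            rcases hx with rfl | ⟨_, ⟨i, rfl⟩, rfl⟩
            · exact Ideal.subset_span (by simp)
            · have hdi : d ∣ f i := by
                fin_cases i
                · exact hd0
                · exact hd1
              obtain ⟨c, hc⟩ := hdi
              rw [hc, map_mul]
              exact Ideal.mul_mem_right _ _ (Ideal.subset_span (by simp))
          have hne : Ideal.span {ℓ, σ d} ≠ ⊤ := by
            intro htop
            rw [Ideal.eq_top_iff_one, Ideal.mem_span_pair] at htop
            obtain ⟨a, b, hab⟩ := htop
            have h1 := congrArg φ hab
            rw [map_add, map_mul, map_mul, hφℓ, hφσ, mul_zero, zero_add, map_one] at h1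
            exact hd (IsUnit.of_mul_eq_one (φ b) (by rw [mul_comm]; exact h1))
          obtain ⟨p, hp⟩ := Ideal.nonempty_minimalPrimes hne
          have hpp : p.IsPrime := hp.1.1
          have h2 := height_two ⟨p, hpp⟩ ℓ (σ d) hp
          have h3 : idealHeight I ≤ Order.height
              (⟨p, hpp⟩ : PrimeSpectrum (MvPolynomial (Fin (n+1)) k)) :=
            iInf₂_le (⟨p, hpp⟩ : PrimeSpectrum (MvPolynomial (Fin (n+1)) k)) (hle.trans hp.1.2)
          rw [hht] at h3
          exact absurd (h3.trans h2) (by decide)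
        intro x hx
        change L[2] * x ∈ Ideal.ofList (L.take 2) at hx
        change x ∈ Ideal.ofList (L.take 2)
        rw [hL2, hspan, Ideal.mem_span_pair] at hx
        rw [hspan]
        obtain ⟨a, b, hab⟩ := hx
        have h1 := congrArg φ hab
        rw [map_add, map_mul, map_mul, map_mul, hφℓ, hφσ, hφσ, mul_zero, zero_add] at h1
        obtain ⟨c, hc⟩ := hcop.dvd_of_dvd_mul_left (Dvd.intro_left _ h1)
        obtain ⟨t, ht⟩ := hσφ x
        rw [hc, map_mul] at ht
        rw [Ideal.mem_span_pair]
        exact ⟨-t, σ c, by linear_combination ht⟩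
    · omega
  · change ⊤ ≠ Ideal.span {x | x ∈ L} • ⊤
    rw [← hLI]
    simpa using hI.symm

end Final



/-- If a height-three arithmetically Gorenstein ideal contains a nonzero homogeneous
element of degree 1, then it is a complete intersection. -/
theorem stmt_10 (I : Ideal (MvPolynomial (Fin (n+1)) k))
    (hGor : IsArithGorHt3 I)
    (hlin : ∃ f ∈ I, f ≠ 0 ∧ MvPolynomial.IsHomogeneous f 1) :
    IsCI I := by
  obtain ⟨hI, ⟨T, hT, hIT⟩, hht, hv, hc⟩ := hGor
  obtain ⟨ℓ, hℓI, h0, hℓ⟩ := hlin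
  obtain ⟨φ, σ, hφσ, hφℓ, hσφ, hφh, hσh⟩ := exists_coord ℓ hℓ h0
  let J : Ideal (MvPolynomial (Fin n) k) := I.map φ
  have hJ : ∀ s, s ∈ J ↔ σ s ∈ I := by
    intro s
    constructor
    · intro hs
      obtain ⟨r, hr, rfl⟩ := (Ideal.mem_map_iff_of_surjective φ (fun s ↦ ⟨σ s, hφσ s⟩)).1 hs
      obtain ⟨t, ht⟩ := hσφ r
      rw [ht]
      exact I.add_mem hr (Ideal.mul_mem_right _ _ hℓI)
    · intro hs
      have := Ideal.mem_map_of_mem φ hs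
      rwa [hφσ] at this
  have hJtop : J ≠ ⊤ := by
    intro h
    rw [Ideal.eq_top_iff_one, hJ, map_one] at h
    exact hI ((Ideal.eq_top_iff_one I).2 h)
  have hJT : J = Ideal.span (φ '' T) := by
    change I.map φ = _
    rw [hIT, Ideal.map_span]
  obtain ⟨m, f, hf, hfJ, hrel⟩ := exists_min_gens J hJtop (φ '' T) (by
    rintro _ ⟨p, hp, rfl⟩
    obtain ⟨d, hd⟩ := hT p hp
    exact ⟨d, hφh p d hd⟩) hJT
  have hm := gor_gens_le_two I hv hc ℓ h0 hℓI φ σ hφσ hφℓ hσφ J hJ m f (fun i ↦ (hf i).1) hfJ hrel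
  exact gor_ci_aux I hI hht ℓ h0 hℓI hℓ φ σ hφσ hφℓ hσφ hσh J hJ m f hf hfJ hm

end
end

section
/- Assume the field k is infinite and n ≥ 2. Let f, g, h be a regular sequence of homogeneous elements of positive degree in R with deg f ≤ deg g ≤ deg h, let a, b ∈ R be homogeneous elements such that g' := a·f + b·g + h is homogeneous of degree deg h, and let f' ∈ (f,g) be a nonzero homogeneous element with deg f' = deg f. Then there exists a homogeneous element h' ∈ (f,g) of degree deg g such that f', h' is a regular sequence, (f',h') = (f,g), and consequently (f', g', h') = (f,g,h). -/
/-
Common setup: `R = k[x₀,…,xₙ]` is the standard graded polynomial ring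
`MvPolynomial (Fin (n+1)) k` over a field `k`.
-/

open CategoryTheory MvPolynomial RingTheory

noncomputable section

variable {k : Type} [Field k] {n : ℕ}

lemma aux_hc_lt (p q : MvPolynomial (Fin (n+1)) k) (i d : ℕ)
    (hq : q.IsHomogeneous i) (h : d < i) : homogeneousComponent d (p * q) = 0 := by
  letI : GradedAlgebra (homogeneousSubmodule (Fin (n+1)) k) := MvPolynomial.gradedAlgebra
  rw [← decomposition.decompose'_apply]
  exact DirectSum.coe_decompose_mul_of_right_mem_of_not_le
    (homogeneousSubmodule (Fin (n+1)) k) hq (not_le.mpr h)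

lemma aux_hc_eq (p q : MvPolynomial (Fin (n+1)) k) (i : ℕ)
    (hq : q.IsHomogeneous i) : homogeneousComponent i (p * q) = C (coeff 0 p) * q := by
  letI : GradedAlgebra (homogeneousSubmodule (Fin (n+1)) k) := MvPolynomial.gradedAlgebra
  have h := DirectSum.coe_decompose_mul_of_right_mem_of_le (a := p)
    (homogeneousSubmodule (Fin (n+1)) k) hq (le_refl i)
  rw [Nat.sub_self] at h
  rw [← homogeneousComponent_zero, ← decomposition.decompose'_apply,
    ← decomposition.decompose'_apply]
  exact h

lemma aux_reg_iff (u v : MvPolynomial (Fin (n+1)) k) :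
    RingTheory.Sequence.IsWeaklyRegular (MvPolynomial (Fin (n+1)) k) [u, v] ↔
      u ≠ 0 ∧ ∀ x y, v * x = u * y → ∃ z, x = u * z := by
  rw [RingTheory.Sequence.isWeaklyRegular_cons_iff,
    RingTheory.Sequence.isWeaklyRegular_singleton_iff]
  refine and_congr ?_ ?_
  · constructor
    · rintro h rfl
      exact one_ne_zero (h (a₁ := 1) (a₂ := 0) (by simp))
    · intro h x y hxy
      exact mul_left_cancel₀ h hxy
  · rw [isSMulRegular_quotient_iff_mem_of_smul_mem]
    simp only [Submodule.mem_smul_pointwise_iff_exists, smul_eq_mul, Submodule.mem_top, true_and]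
    constructor
    · intro h x y hxy
      obtain ⟨z, hz⟩ := h x ⟨y, hxy.symm⟩
      exact ⟨z, hz.symm⟩
    · rintro h x ⟨y, hy⟩
      obtain ⟨z, hz⟩ := h x y hy.symm
      exact ⟨z, hz.symm⟩

/-- Case 2 in the proof of the main theorem: if `g' = a·f + b·g + h` is homogeneous of
degree `deg h` and `f' ∈ (f,g)` is nonzero homogeneous of degree `deg f`, then there is
`h' ∈ (f,g)` of degree `deg g` with `f', h'` a regular sequence, `(f',h') = (f,g)`, and
consequently `(f', g', h') = (f,g,h)`. -/
theorem stmt_12 [Infinite k] (hn : 2 ≤ n)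
    (f g h a b f' : MvPolynomial (Fin (n+1)) k) (df dg dh : ℕ)
    (hdf : 0 < df) (hdg : 0 < dg) (hdh : 0 < dh)
    (hfg : df ≤ dg) (hgh : dg ≤ dh)
    (hfhom : MvPolynomial.IsHomogeneous f df) (hghom : MvPolynomial.IsHomogeneous g dg)
    (hhhom : MvPolynomial.IsHomogeneous h dh)
    (hreg : RingTheory.Sequence.IsRegular (MvPolynomial (Fin (n+1)) k) [f, g, h])
    (hahom : ∃ da, MvPolynomial.IsHomogeneous a da)
    (hbhom : ∃ db, MvPolynomial.IsHomogeneous b db)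
    (hg'hom : MvPolynomial.IsHomogeneous (a * f + b * g + h) dh)
    (hf'mem : f' ∈ (Ideal.span {f, g} : Ideal (MvPolynomial (Fin (n+1)) k))) (hf'0 : f' ≠ 0)
    (hfhom' : MvPolynomial.IsHomogeneous f' df) :
    ∃ h' ∈ (Ideal.span {f, g} : Ideal (MvPolynomial (Fin (n+1)) k)),
      MvPolynomial.IsHomogeneous h' dg ∧
      RingTheory.Sequence.IsRegular (MvPolynomial (Fin (n+1)) k) [f', h'] ∧
      Ideal.span {f', h'} = (Ideal.span {f, g} : Ideal (MvPolynomial (Fin (n+1)) k)) ∧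
      Ideal.span {f', a * f + b * g + h, h'} =
        (Ideal.span {f, g, h} : Ideal (MvPolynomial (Fin (n+1)) k)) := by
  obtain ⟨α, β, hαβ⟩ := Ideal.mem_span_pair.mp hf'mem
  have hne : (Ideal.span {f, g, h} : Ideal (MvPolynomial (Fin (n+1)) k)) ≠ ⊤ := by
    intro ht
    apply hreg.top_ne_smul
    have : Ideal.ofList [f, g, h] = Ideal.span {f, g, h} := by
      simp [Ideal.ofList_cons, Ideal.span_insert]
    rw [this, ht]
    simp
  have hw : RingTheory.Sequence.IsWeaklyRegular (MvPolynomial (Fin (n+1)) k) [f, g] :=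
    ((RingTheory.Sequence.isWeaklyRegular_append_iff _ [f, g] [h]).mp
      hreg.toIsWeaklyRegular).1
  obtain ⟨hf0, hfgr⟩ := (aux_reg_iff f g).mp hw
  -- reduction to the two-generator claim
  suffices H : ∃ h', MvPolynomial.IsHomogeneous h' dg ∧
      RingTheory.Sequence.IsWeaklyRegular (MvPolynomial (Fin (n+1)) k) [f', h'] ∧
      Ideal.span {f', h'} = (Ideal.span {f, g} : Ideal (MvPolynomial (Fin (n+1)) k)) by
    obtain ⟨h', hh, hr, hs⟩ := H
    have hle : (Ideal.span {f, g} : Ideal (MvPolynomial (Fin (n+1)) k)) ≤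
        Ideal.span {f, g, h} := Ideal.span_mono (by intro x; simp; tauto)
    refine ⟨h', hs ▸ Ideal.subset_span (by simp), hh, ⟨hr, ?_⟩, hs, ?_⟩
    · intro ht
      have he : Ideal.ofList [f', h'] = Ideal.span {f', h'} := by
        simp [Ideal.ofList_cons, Ideal.span_insert]
      rw [he, hs, smul_eq_mul, Ideal.mul_top] at ht
      exact hne (top_le_iff.mp (ht ▸ hle))
    · have h1 : (Ideal.span {f', a * f + b * g + h, h'} : Ideal (MvPolynomial (Fin (n+1)) k))
          = Ideal.span {f, g} ⊔ Ideal.span {a * f + b * g + h} := by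
        rw [← hs, ← Ideal.span_union]
        congr 1
        ext x; simp; tauto
      have h2 : (Ideal.span {f, g, h} : Ideal (MvPolynomial (Fin (n+1)) k))
          = Ideal.span {f, g} ⊔ Ideal.span {h} := by
        rw [← Ideal.span_union]
        congr 1
        ext x; simp; tauto
      have hab : a * f + b * g ∈ (Ideal.span {f, g} : Ideal (MvPolynomial (Fin (n+1)) k)) :=
        Ideal.mem_span_pair.mpr ⟨a, b, rfl⟩
      rw [h1, h2]
      apply le_antisymm
      · refine sup_le le_sup_left ?_
        rw [Ideal.span_singleton_le_iff_mem]
        exact add_mem (Ideal.mem_sup_left hab)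
          (Ideal.mem_sup_right (Ideal.mem_span_singleton_self h))
      · refine sup_le le_sup_left ?_
        rw [Ideal.span_singleton_le_iff_mem]
        have := sub_mem (Ideal.mem_sup_right (S := Ideal.span {f, g})
          (Ideal.mem_span_singleton_self (a * f + b * g + h)))
          (Ideal.mem_sup_left hab)
        simpa using this
  -- the new form is a constant combination of `f` and `g`, involving `g` only if the degrees agree
  have hce : ∃ c e : k, f' = C c * f + C e * g ∧ (c = 0 → df = dg) := by
    have hself : homogeneousComponent df f' = f' := homogeneousComponent_eq_self hfhom'
    rw [← hαβ, map_add, aux_hc_eq _ _ _ hfhom, hαβ] at hself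
    rcases hfg.lt_or_eq with hlt | heq
    · rw [aux_hc_lt _ _ _ _ hghom hlt] at hself
      refine ⟨coeff 0 α, 0, by simpa using hself.symm, ?_⟩
      intro h0
      rw [h0] at hself
      simp at hself
      exact absurd hself.symm hf'0
    · rw [heq, aux_hc_eq _ _ _ hghom] at hself
      exact ⟨coeff 0 α, coeff 0 β, hself.symm, fun _ => heq⟩
  obtain ⟨c, e, hf', hc0⟩ := hce
  by_cases hc : c = 0
  · have hd := hc0 hc
    subst hc
    have he : e ≠ 0 := by
      rintro rfl
      apply hf'0
      simp [hf']
    have hee : (C e⁻¹ * C e : MvPolynomial (Fin (n+1)) k) = 1 := by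
      rw [← C_mul, inv_mul_cancel₀ he, C_1]
    simp only [C_0, zero_mul, zero_add] at hf'
    refine ⟨f, hd ▸ hfhom, (aux_reg_iff _ _).mpr ⟨hf'0, ?_⟩, ?_⟩
    · intro x y hxy
      rw [hf'] at hxy ⊢
      obtain ⟨z, hz⟩ := hfgr (C e * y) x (by linear_combination -hxy)
      refine ⟨C e⁻¹ * z, ?_⟩
      apply mul_left_cancel₀ hf0
      linear_combination hxy + g * hz - f * g * z * hee
    · apply le_antisymm
      · rw [Ideal.span_le]
        rintro x (rfl | rfl)
        · exact hf'mem
        · exact Ideal.subset_span (by simp)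
      · rw [Ideal.span_le]
        rintro x (rfl | rfl)
        · exact Ideal.subset_span (by simp)
        · exact Ideal.mem_span_pair.mpr ⟨C e⁻¹, 0, by rw [hf']; linear_combination x * hee⟩
  · have hcc : (C c⁻¹ * C c : MvPolynomial (Fin (n+1)) k) = 1 := by
      rw [← C_mul, inv_mul_cancel₀ hc, C_1]
    refine ⟨g, hghom, (aux_reg_iff _ _).mpr ⟨hf'0, ?_⟩, ?_⟩
    · intro x y hxy
      rw [hf'] at hxy ⊢
      obtain ⟨z, hz⟩ := hfgr (x - C e * y) (C c * y) (by linear_combination hxy)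
      have hz2 : C c * y = g * z := by
        apply mul_left_cancel₀ hf0
        linear_combination -hxy + g * hz
      refine ⟨C c⁻¹ * z, ?_⟩
      linear_combination hz + C e * C c⁻¹ * hz2 - (C e * y + f * z) * hcc
    · apply le_antisymm
      · rw [Ideal.span_le]
        rintro x (rfl | rfl)
        · exact hf'mem
        · exact Ideal.subset_span (by simp)
      · rw [Ideal.span_le]
        rintro x (rfl | rfl)
        · exact Ideal.mem_span_pair.mpr ⟨C c⁻¹, - C c⁻¹ * C e, by
            rw [hf']; linear_combination x * hcc⟩
        · exact Ideal.subset_span (by simp)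

end
end

section
/- Let R = k[x₀,x₁,x₂,x₃] with its standard grading, let d ≥ 1, and let G ∈ R be a homogeneous polynomial of degree d involving only the variables x₁, x₂, x₃ and whose coefficient of x₁^d is nonzero (so the plane curve {x₀ = G = 0} is disjoint from the line {x₂ = x₃ = 0}). Let I = (x₂,x₃) ∩ (x₀,G) be the homogeneous ideal of the disjoint union of the line and the plane curve. Then: (1) I contains no nonzero homogeneous element of degree 1, and the least degree of a nonzero homogeneous element of I is 2; (2) I contains a regular sequence of two homogeneous elements of degrees 2 and d+1; and (3) I contains no regular sequence of two homogeneous elements each of degree at most d. In other words, a₁(I) = 2 and a₂(I) = d+1, so every complete intersection of least degree inside I has type (2, d+1). -/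
/-
Common setup: `R = k[x₀,…,xₙ]` is the standard graded polynomial ring
`MvPolynomial (Fin (n+1)) k` over a field `k`.
-/

open CategoryTheory MvPolynomial RingTheory

noncomputable section

variable {k : Type} [Field k] {n : ℕ}

open scoped Pointwise in
theorem reg_pair_iff {A : Type} [CommRing A] [IsDomain A] (f g : A) :
    RingTheory.Sequence.IsRegular A [f, g] ↔
      f ≠ 0 ∧ (∀ x, f ∣ g * x → f ∣ x) ∧ Ideal.span {f, g} ≠ (⊤ : Ideal A) := by
  have h1 : IsSMulRegular A f ↔ f ≠ 0 := by
    constructor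
    · rintro h rfl
      exact one_ne_zero (h (by simp : (0 : A) • (1 : A) = (0 : A) • (0 : A)))
    · intro h x y hxy
      exact mul_left_cancel₀ h hxy
  have h2 : IsSMulRegular (QuotSMulTop f A) g ↔ ∀ x, f ∣ g * x → f ∣ x := by
    have hm : ∀ x : A, x ∈ (f • (⊤ : Submodule A A)) ↔ f ∣ x := by
      intro x
      rw [Submodule.mem_smul_pointwise_iff_exists]
      constructor
      · rintro ⟨y, -, rfl⟩
        exact ⟨y, rfl⟩
      · rintro ⟨y, rfl⟩
        exact ⟨y, trivial, rfl⟩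
    rw [isSMulRegular_quotient_iff_mem_of_smul_mem]
    simp only [hm, smul_eq_mul]
  rw [RingTheory.Sequence.isRegular_iff, RingTheory.Sequence.isWeaklyRegular_cons_iff,
    RingTheory.Sequence.isWeaklyRegular_singleton_iff, h1, h2, and_assoc]
  have h3 : (Ideal.ofList [f, g] • ⊤ : Submodule A A) = Ideal.span {f, g} := by
    rw [smul_eq_mul, Ideal.mul_top]
    simp [Ideal.ofList, Set.insert_def]
  rw [h3, ne_comm (a := (⊤ : Ideal A))]

theorem reg_single_iff {A : Type} [CommRing A] [IsDomain A] (f : A) :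
    RingTheory.Sequence.IsRegular A [f] ↔ f ≠ 0 ∧ Ideal.span {f} ≠ (⊤ : Ideal A) := by
  have h1 : IsSMulRegular A f ↔ f ≠ 0 := by
    constructor
    · rintro h rfl
      exact one_ne_zero (h (by simp : (0 : A) • (1 : A) = (0 : A) • (0 : A)))
    · intro h x y hxy
      exact mul_left_cancel₀ h hxy
  rw [RingTheory.Sequence.isRegular_iff,
    RingTheory.Sequence.isWeaklyRegular_singleton_iff, h1]
  have h3 : (Ideal.ofList [f] • ⊤ : Submodule A A) = Ideal.span {f} := by
    rw [smul_eq_mul, Ideal.mul_top]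
    simp [Ideal.ofList]
  rw [h3, ne_comm (a := (⊤ : Ideal A))]

/-- Set the variable `x₀` to zero. -/
def killX0 : MvPolynomial (Fin 4) k →ₐ[k] MvPolynomial (Fin 4) k :=
  MvPolynomial.aeval (fun i => if i = 0 then 0 else MvPolynomial.X i)

theorem killX0_sub (f : MvPolynomial (Fin 4) k) :
    (MvPolynomial.X 0 : MvPolynomial (Fin 4) k) ∣ f - killX0 f := by
  rw [← Ideal.mem_span_singleton, ← Ideal.Quotient.eq]
  have : (Ideal.Quotient.mkₐ k (Ideal.span {(MvPolynomial.X 0 : MvPolynomial (Fin 4) k)})) =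
      (Ideal.Quotient.mkₐ k (Ideal.span {(MvPolynomial.X 0 : MvPolynomial (Fin 4) k)})).comp
        killX0 := by
    apply MvPolynomial.algHom_ext
    intro i
    by_cases hi : i = 0
    · subst hi
      simp only [killX0, AlgHom.comp_apply, MvPolynomial.aeval_X, if_true, map_zero]
      exact Ideal.Quotient.eq_zero_iff_mem.2 (Ideal.mem_span_singleton_self _)
    · simp [killX0, hi]
  exact congrArg (fun φ => φ f) this

theorem mem_line_iff (f : MvPolynomial (Fin 4) k) :
    f ∈ (Ideal.span {MvPolynomial.X 2, MvPolynomial.X 3} : Ideal (MvPolynomial (Fin 4) k)) ↔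
      ∀ m ∈ f.support, m 2 ≠ 0 ∨ m 3 ≠ 0 := by
  have := MvPolynomial.mem_ideal_span_X_image (x := f) (s := ({2, 3} : Set (Fin 4)))
  rw [Set.image_pair] at this
  rw [this]
  simp

theorem X0_dvd_of_mem (d : ℕ) (G : MvPolynomial (Fin 4) k)
    (hGdeg : MvPolynomial.IsHomogeneous G d)
    (hGvars : ∀ m ∈ G.support, m 0 = 0)
    (hGcoeff : MvPolynomial.coeff (Finsupp.single 1 d) G ≠ 0)
    (f : MvPolynomial (Fin 4) k)
    (hf : f ∈ (Ideal.span {MvPolynomial.X 2, MvPolynomial.X 3} :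
      Ideal (MvPolynomial (Fin 4) k)))
    (hf' : f ∈ Ideal.span {MvPolynomial.X 0, G}) (e : ℕ) (he : e ≤ d)
    (hfe : MvPolynomial.IsHomogeneous f e) :
    (MvPolynomial.X 0 : MvPolynomial (Fin 4) k) ∣ f := by
  have hG0 : G ≠ 0 := by
    rintro rfl
    simp at hGcoeff
  have hkG : killX0 G = G := by
    have : killX0 G = MvPolynomial.aeval MvPolynomial.X G := by
      apply MvPolynomial.eval₂Hom_congr' rfl _ rfl
      intro i hi _
      have : i ≠ 0 := by
        rintro rfl
        rw [MvPolynomial.mem_vars] at hi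
        obtain ⟨m, hm, hm'⟩ := hi
        exact (Finsupp.mem_support_iff.1 hm') (hGvars m hm)
      simp [this]
    rw [this, MvPolynomial.aeval_X_left_apply]
  obtain ⟨a, b, hab⟩ := Ideal.mem_span_pair.1 hf'
  have hkf : killX0 f = killX0 b * G := by
    rw [← hab, map_add, map_mul, map_mul, hkG]
    simp [killX0]
  have hkline : killX0 f ∈ (Ideal.span {MvPolynomial.X 2, MvPolynomial.X 3} :
      Ideal (MvPolynomial (Fin 4) k)) := by
    obtain ⟨p, q, hpq⟩ := Ideal.mem_span_pair.1 hf
    refine Ideal.mem_span_pair.2 ⟨killX0 p, killX0 q, ?_⟩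
    rw [← hpq, map_add, map_mul, map_mul]
    simp [killX0]
  have hkhom : (killX0 f).IsHomogeneous e := by
    have := hfe.aeval (n := 1)
      (g := fun i : Fin 4 => if i = 0 then 0 else (MvPolynomial.X i : MvPolynomial (Fin 4) k))
      (by
        intro i
        by_cases hi : i = 0
        · simpa [hi] using MvPolynomial.isHomogeneous_zero _ _ _
        · simpa [hi] using MvPolynomial.isHomogeneous_X _ _)
    simpa [killX0] using this
  have hk0 : killX0 f = 0 := by
    by_contra hne
    have hb : killX0 b ≠ 0 := by
      intro h
      rw [h, zero_mul] at hkf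
      exact hne hkf
    have h1 := hkhom.totalDegree hne
    rw [hkf, MvPolynomial.totalDegree_mul_of_isDomain hb hG0, hGdeg.totalDegree hG0] at h1
    have h2 : (killX0 b).totalDegree = 0 := by omega
    rw [MvPolynomial.totalDegree_eq_zero_iff_eq_C] at h2
    have h3 : MvPolynomial.coeff (Finsupp.single 1 d) (killX0 f) = 0 := by
      by_contra h
      have := (mem_line_iff _).1 hkline _ (MvPolynomial.mem_support_iff.2 h)
      simp at this
    rw [hkf, h2, MvPolynomial.coeff_C_mul, mul_eq_zero] at h3
    rcases h3 with h3 | h3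
    · rw [h3, map_zero] at h2
      exact hb h2
    · exact hGcoeff h3
  have := killX0_sub f
  rwa [hk0, sub_zero] at this

theorem coeff_of_X_dvd {i : Fin 4} {f : MvPolynomial (Fin 4) k}
    (h : (MvPolynomial.X i : MvPolynomial (Fin 4) k) ∣ f) (m : Fin 4 →₀ ℕ)
    (hm : m ∈ f.support) : m i ≠ 0 := by
  have h1 := MvPolynomial.mem_ideal_span_X_image (x := f) (s := ({i} : Set (Fin 4)))
  rw [Set.image_singleton, Ideal.mem_span_singleton] at h1
  simpa using h1.1 h m hm

/-- For the disjoint union of a line and a plane curve of degree `d` in `ℙ³`: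
the ideal `I = (x₂,x₃) ∩ (x₀,G)` has least degree 2, contains a regular sequence of
degrees `(2, d+1)`, and contains no regular sequence of two elements of degrees `≤ d`;
hence `a₁(I) = 2` and `a₂(I) = d+1`. -/
theorem stmt_13 (d : ℕ) (hd : 1 ≤ d) (G : MvPolynomial (Fin 4) k)
    (hGdeg : MvPolynomial.IsHomogeneous G d)
    (hGvars : ∀ m ∈ G.support, m 0 = 0)
    (hGcoeff : MvPolynomial.coeff (Finsupp.single 1 d) G ≠ 0)
    (I : Ideal (MvPolynomial (Fin 4) k))
    (hI : I = (Ideal.span {MvPolynomial.X 2, MvPolynomial.X 3} : Ideal (MvPolynomial (Fin 4) k)) ⊓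
      Ideal.span {MvPolynomial.X 0, G}) :
    ((∀ f ∈ I, f ≠ 0 → ∀ e, MvPolynomial.IsHomogeneous f e → 2 ≤ e) ∧
      (∃ f ∈ I, f ≠ 0 ∧ MvPolynomial.IsHomogeneous f 2)) ∧
    (∃ f g : MvPolynomial (Fin 4) k, f ∈ I ∧ g ∈ I ∧
      MvPolynomial.IsHomogeneous f 2 ∧ MvPolynomial.IsHomogeneous g (d+1) ∧
      RingTheory.Sequence.IsRegular (MvPolynomial (Fin 4) k) [f, g]) ∧
    (¬ ∃ (f g : MvPolynomial (Fin 4) k) (e₁ e₂ : ℕ), f ∈ I ∧ g ∈ I ∧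
      e₁ ≤ d ∧ e₂ ≤ d ∧ MvPolynomial.IsHomogeneous f e₁ ∧ MvPolynomial.IsHomogeneous g e₂ ∧
      RingTheory.Sequence.IsRegular (MvPolynomial (Fin 4) k) [f, g]) ∧
    aDeg 1 I = 2 ∧ aDeg 2 I = d + 1 := by
  have key : ∀ f ∈ I, ∀ e ≤ d, MvPolynomial.IsHomogeneous f e →
      (MvPolynomial.X 0 : MvPolynomial (Fin 4) k) ∣ f := by
    intro f hf e he hfe
    rw [hI] at hf
    exact X0_dvd_of_mem d G hGdeg hGvars hGcoeff f hf.1 hf.2 e he hfe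
  have hG0 : G ≠ 0 := by
    rintro rfl
    simp at hGcoeff
  have hX0G : ¬ (MvPolynomial.X 0 : MvPolynomial (Fin 4) k) ∣ G := by
    intro h
    exact coeff_of_X_dvd h _ (MvPolynomial.mem_support_iff.2 hGcoeff) (by simp)
  have hX2G : ¬ (MvPolynomial.X 2 : MvPolynomial (Fin 4) k) ∣ G := by
    intro h
    exact coeff_of_X_dvd h _ (MvPolynomial.mem_support_iff.2 hGcoeff) (by simp)
  have part1 : ∀ f ∈ I, f ≠ 0 → ∀ e, MvPolynomial.IsHomogeneous f e → 2 ≤ e := by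
    intro f hf hf0 e hfe
    by_contra hlt
    have hdvd := key f hf e (by omega) hfe
    obtain ⟨m, hm⟩ := MvPolynomial.support_nonempty.2 hf0
    have h0 := coeff_of_X_dvd hdvd m hm
    rw [hI] at hf
    have h23 := (mem_line_iff f).1 hf.1 m hm
    have hdeg := hfe (MvPolynomial.mem_support_iff.1 hm)
    rw [Finsupp.weight_apply, Finsupp.sum_fintype _ _ (by simp)] at hdeg
    simp [Fin.sum_univ_four] at hdeg
    omega
  have hfI : (MvPolynomial.X 0 * MvPolynomial.X 2 : MvPolynomial (Fin 4) k) ∈ I := by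
    rw [hI]
    exact ⟨Ideal.mul_mem_left _ _ (Ideal.subset_span (by simp)),
      Ideal.mul_mem_right _ _ (Ideal.subset_span (by simp))⟩
  have hgI : (MvPolynomial.X 3 * G : MvPolynomial (Fin 4) k) ∈ I := by
    rw [hI]
    exact ⟨Ideal.mul_mem_right _ _ (Ideal.subset_span (by simp)),
      Ideal.mul_mem_left _ _ (Ideal.subset_span (by simp))⟩
  have hf0 : (MvPolynomial.X 0 * MvPolynomial.X 2 : MvPolynomial (Fin 4) k) ≠ 0 :=
    mul_ne_zero (MvPolynomial.X_ne_zero _) (MvPolynomial.X_ne_zero _)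
  have hfhom : (MvPolynomial.X 0 * MvPolynomial.X 2 : MvPolynomial (Fin 4) k).IsHomogeneous 2 :=
    (MvPolynomial.isHomogeneous_X _ _).mul (MvPolynomial.isHomogeneous_X _ _)
  have hghom : (MvPolynomial.X 3 * G : MvPolynomial (Fin 4) k).IsHomogeneous (d + 1) := by
    rw [add_comm]
    exact (MvPolynomial.isHomogeneous_X _ _).mul hGdeg
  have hItop : I ≠ ⊤ := by
    intro h
    have h1 : (1 : MvPolynomial (Fin 4) k) ∈ I := h ▸ trivial
    have := part1 1 h1 one_ne_zero 0 (MvPolynomial.isHomogeneous_one _ _)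
    omega
  have hreg : RingTheory.Sequence.IsRegular (MvPolynomial (Fin 4) k)
      [MvPolynomial.X 0 * MvPolynomial.X 2, MvPolynomial.X 3 * G] := by
    rw [reg_pair_iff]
    refine ⟨hf0, ?_, ?_⟩
    · intro x hx
      have p0 : Prime (MvPolynomial.X 0 : MvPolynomial (Fin 4) k) := MvPolynomial.X_prime
      have p2 : Prime (MvPolynomial.X 2 : MvPolynomial (Fin 4) k) := MvPolynomial.X_prime
      have n03 : ¬ (MvPolynomial.X 0 : MvPolynomial (Fin 4) k) ∣ MvPolynomial.X 3 := by
        simp [MvPolynomial.X_dvd_X]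
      have n23 : ¬ (MvPolynomial.X 2 : MvPolynomial (Fin 4) k) ∣ MvPolynomial.X 3 := by
        simp [MvPolynomial.X_dvd_X]
      have n20 : ¬ (MvPolynomial.X 2 : MvPolynomial (Fin 4) k) ∣ MvPolynomial.X 0 := by
        simp [MvPolynomial.X_dvd_X]
      have h0 : MvPolynomial.X 0 ∣ x := by
        rcases p0.dvd_or_dvd ((Dvd.intro _ rfl).trans hx) with h | h
        · rcases p0.dvd_or_dvd h with h | h
          · exact absurd h n03
          · exact absurd h hX0G
        · exact h
      have h2 : MvPolynomial.X 2 ∣ x := by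
        rcases p2.dvd_or_dvd ((Dvd.intro_left _ rfl).trans hx) with h | h
        · rcases p2.dvd_or_dvd h with h | h
          · exact absurd h n23
          · exact absurd h hX2G
        · exact h
      obtain ⟨y, rfl⟩ := h0
      rcases p2.dvd_or_dvd h2 with h | h
      · exact absurd h n20
      · exact mul_dvd_mul_left _ h
    · intro h
      apply hItop
      rw [eq_top_iff, ← h, Ideal.span_le]
      rintro z (rfl | rfl)
      · exact hfI
      · exact hgI
  have hno : ¬ ∃ (f g : MvPolynomial (Fin 4) k) (e₁ e₂ : ℕ), f ∈ I ∧ g ∈ I ∧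
      e₁ ≤ d ∧ e₂ ≤ d ∧ MvPolynomial.IsHomogeneous f e₁ ∧ MvPolynomial.IsHomogeneous g e₂ ∧
      RingTheory.Sequence.IsRegular (MvPolynomial (Fin 4) k) [f, g] := by
    rintro ⟨f, g, e₁, e₂, hf, hg, he₁, he₂, hfh, hgh, hr⟩
    rw [reg_pair_iff] at hr
    obtain ⟨hne, hr, -⟩ := hr
    obtain ⟨f', rfl⟩ := key f hf e₁ he₁ hfh
    obtain ⟨g', rfl⟩ := key g hg e₂ he₂ hgh
    obtain ⟨h, hh⟩ := hr f' ⟨g', by ring⟩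
    have hf' : f' ≠ 0 := right_ne_zero_of_mul hne
    have : (MvPolynomial.X 0 : MvPolynomial (Fin 4) k) * h = 1 := by
      apply mul_left_cancel₀ hf'
      rw [mul_one]
      conv_rhs => rw [hh]
      ring
    exact (MvPolynomial.X_prime (R := k) (i := (0 : Fin 4))).not_unit (IsUnit.of_mul_eq_one _ this)
  refine ⟨⟨part1, _, hfI, hf0, hfhom⟩, ⟨_, _, hfI, hgI, hfhom, hghom, hreg⟩, hno, ?_, ?_⟩
  · apply le_antisymm
    · apply Nat.sInf_le
      refine ⟨[MvPolynomial.X 0 * MvPolynomial.X 2], rfl, ?_, ?_, ?_⟩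
      · simpa using hfI
      · intro f hf
        rw [List.mem_singleton] at hf
        exact ⟨2, le_rfl, hf ▸ hfhom⟩
      · rw [reg_single_iff]
        refine ⟨hf0, fun h => hItop ?_⟩
        rw [eq_top_iff, ← h, Ideal.span_le]
        simpa using hfI
    · apply le_csInf
      · refine ⟨2, [MvPolynomial.X 0 * MvPolynomial.X 2], rfl, ?_, ?_, ?_⟩
        · simpa using hfI
        · intro f hf
          rw [List.mem_singleton] at hf
          exact ⟨2, le_rfl, hf ▸ hfhom⟩
        · rw [reg_single_iff]
          refine ⟨hf0, fun h => hItop ?_⟩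
          rw [eq_top_iff, ← h, Ideal.span_le]
          simpa using hfI
      · rintro b ⟨l, hl, hlI, hlh, hlr⟩
        obtain ⟨f, rfl⟩ := List.length_eq_one_iff.1 hl
        obtain ⟨e, he, hfe⟩ := hlh f (by simp)
        exact (part1 f (hlI f (by simp)) ((reg_single_iff f).1 hlr).1 e hfe).trans he
  · have hmem : d + 1 ∈ {d : ℕ | ∃ l : List (MvPolynomial (Fin 4) k), l.length = 2 ∧
        (∀ f ∈ l, f ∈ I) ∧ (∀ f ∈ l, ∃ e ≤ d, MvPolynomial.IsHomogeneous f e) ∧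
        RingTheory.Sequence.IsRegular (MvPolynomial (Fin 4) k) l} := by
      refine ⟨_, rfl, ?_, ?_, hreg⟩
      · intro f hf
        simp only [List.mem_cons, List.not_mem_nil, or_false] at hf
        rcases hf with rfl | rfl
        · exact hfI
        · exact hgI
      · intro f hf
        simp only [List.mem_cons, List.not_mem_nil, or_false] at hf
        rcases hf with rfl | rfl
        · exact ⟨2, by omega, hfhom⟩
        · exact ⟨d + 1, le_rfl, hghom⟩
    apply le_antisymm
    · exact Nat.sInf_le hmem
    · apply le_csInf ⟨_, hmem⟩
      rintro b ⟨l, hl, hlI, hlh, hlr⟩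
      obtain ⟨f, g, rfl⟩ := List.length_eq_two.1 hl
      by_contra hb
      obtain ⟨e₁, he₁, hfe⟩ := hlh f (by simp)
      obtain ⟨e₂, he₂, hge⟩ := hlh g (by simp)
      exact hno ⟨f, g, e₁, e₂, hlI f (by simp), hlI g (by simp), by omega, by omega,
        hfe, hge, hlr⟩

end
end
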